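/- The invariant ring S[W'^*]^G is generated as an F_2-algebra by 11 homogeneous invariants, namely a homogeneous system of parameters of degrees 2, 3, 3, 4, 6, 7 together with 5 further homogeneous invariants of degrees 4, 5, 5, 6, 7; in particular, S[W'^*]^G is generated as an F_2-algebra by invariants of degree at most 7. -/

import Mathlib

set_option synthInstance.maxHeartbeats 1000000
set_option maxHeartbeats 1000000

open MvPolynomial


/-- The field with two elements. -/
abbrev F2 := ZMod 2

/-- `G = GL₃(𝔽₂)`. -/
abbrev G3 := GL (Fin 3) F2

/-- The generator `A` of `G`. -/
def Agen : G3 := ⟨!![1,0,1; 0,1,0; 0,0,1], !![1,0,1; 0,1,0; 0,0,1], by decide, by decide⟩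

/-- The generator `B` of `G`. -/
def Bgen : G3 := ⟨!![0,0,1; 1,0,0; 0,1,0], !![0,1,0; 0,0,1; 1,0,0], by decide, by decide⟩

/-- The matrix `D(A)` of the action on `W'^* = 𝔽₂⁶`. -/
def DA6 : Matrix (Fin 6) (Fin 6) F2 :=
  !![1,0,1,0,0,1; 0,1,0,0,0,0; 0,0,1,0,0,0; 0,0,0,1,1,0; 0,0,0,0,1,0; 0,0,0,0,0,1]

/-- The matrix `D(B)` of the action on `W'^* = 𝔽₂⁶`. -/
def DB6 : Matrix (Fin 6) (Fin 6) F2 :=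
  !![0,0,1,0,0,0; 1,0,0,0,0,0; 0,1,0,0,0,0; 0,0,0,0,0,1; 0,0,0,1,0,0; 0,0,0,0,1,0]

/-- The algebra endomorphism of `S[W'^*] = 𝔽₂[a,b,c,d,e,f]` induced by the right action of
`σ` on the linear forms (coefficient row vectors are multiplied on the right by `D σ`; in
particular the variable `Xᵢ` is sent to the linear form given by the `i`-th row of `D σ`). -/
noncomputable def polyAct (D : G3 →* GL (Fin 6) F2) (σ : G3) :
    MvPolynomial (Fin 6) F2 →ₐ[F2] MvPolynomial (Fin 6) F2 :=
  aeval (fun i => ∑ j, (D σ : Matrix (Fin 6) (Fin 6) F2) i j • X j)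

/-- The invariant ring `S[W'^*]^H` for a subgroup `H ≤ G`. -/
noncomputable def invH (D : G3 →* GL (Fin 6) F2) (H : Subgroup G3) :
    Subalgebra F2 (MvPolynomial (Fin 6) F2) where
  carrier := {p | ∀ σ ∈ H, polyAct D σ p = p}
  mul_mem' := fun ha hb σ hσ => by rw [map_mul, ha σ hσ, hb σ hσ]
  add_mem' := fun ha hb σ hσ => by rw [map_add, ha σ hσ, hb σ hσ]
  one_mem' := fun σ _ => map_one _
  zero_mem' := fun σ _ => map_zero _
  algebraMap_mem' := fun r σ _ => AlgHom.commutes _ r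

/-- The invariant ring `S[W'^*]^G`. -/
noncomputable def invG (D : G3 →* GL (Fin 6) F2) :
    Subalgebra F2 (MvPolynomial (Fin 6) F2) :=
  invH D ⊤

/-!
Every invariant `u` lies in the subalgebra generated by the eleven invariants `q₂, q₃, r₃, e₄, e₆,
e₇, d₄, q₅, r₅, d₆, d₇` after multiplication by a power of the Dickson invariant `d₇` of `d, e, f`:
the invariants `q₂`, `q₃`, `q₅` are linear in `a, b, c` with determinant `d₇`, so Cramer's rule
expresses `d₇ ^ k * u` by them and `d, e, f`. The variables `f`, `e`, `d` are then eliminated one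
after the other: each is a root of a monic polynomial over the previous ring whose degree equals its
number of conjugates, so an element fixed by the conjugations has a constant expression.

It remains to cancel `d₇`. Relations among the generators rewrite every element of the subalgebra,
modulo `d₇`, as a combination of standard power products. At a generic point with `d = 0` the
values of the standard power products of each degree are linearly independent, by a comparison of
top coefficients. Hence a combination divisible by `d₇` vanishes, and the quotient by `d₇` lies in
the subalgebra again.

Further relations bound the exponents of `d₄, q₅, r₅, d₆, d₇` over the first six generators, which
gives finiteness, and six elements over which the ring is finite are algebraically independent
because its transcendence degree is six.

The invariance of the generators and their relations are identities of homogeneous polynomials over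
`𝔽₂`. The Kronecker substitution turns them into identities of univariate polynomials, which are
compared as binary numbers.
-/

/-! ### Polynomials given by decimal codes -/

section DecimalCodes

/-- The exponent vector with decimal code `k`: the exponent of the `i`-th variable is the `i`-th
decimal digit of `k`, counted from the right. -/
def decimalExponents {n : ℕ} (k : ℕ) (i : Fin n) : ℕ := k / 10 ^ (i : ℕ) % 10

/-- The power product `∏ i, v i ^ m i`. -/
def powerProduct {ι R : Type*} [Fintype ι] [CommSemiring R] (v : ι → R) (m : ι → ℕ) : R :=
  ∏ i, v i ^ m i

/-- The value at `v` of the sum of the power products whose decimal codes are listed in `l`. -/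
def evalCodes {n : ℕ} {R : Type*} [CommSemiring R] (v : Fin n → R) (l : List ℕ) : R :=
  (l.map fun k => powerProduct v (decimalExponents k)).sum

/-- The weighted degree of an exponent vector. -/
def weightedDegree {n : ℕ} (w m : Fin n → ℕ) : ℕ := ∑ i, w i * m i

/-- All power products listed in `l` have weighted degree `d`. -/
def AllCodesOfDegree {n : ℕ} (w : Fin n → ℕ) (d : ℕ) (l : List ℕ) : Prop :=
  ∀ k ∈ l, weightedDegree w (decimalExponents k) = d

instance {n : ℕ} (w : Fin n → ℕ) (d : ℕ) (l : List ℕ) : Decidable (AllCodesOfDegree w d l) :=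
  inferInstanceAs (Decidable (∀ k ∈ l, _))

theorem decimalExponents_succ {n : ℕ} (k : ℕ) (i : Fin n) :
    decimalExponents k i.succ = decimalExponents (k / 10) i := by
  simp only [decimalExponents, Fin.val_succ, pow_succ', Nat.div_div_eq_div_mul]

variable {n : ℕ} {R T : Type*} [CommSemiring R] [CommSemiring T]

theorem map_powerProduct {ι F : Type*} [Fintype ι] [FunLike F R T] [RingHomClass F R T] (φ : F)
    (v : ι → R) (m : ι → ℕ) : φ (powerProduct v m) = powerProduct (φ ∘ v) m := by
  simp [powerProduct]

theorem map_evalCodes {F : Type*} [FunLike F R T] [RingHomClass F R T] (φ : F) (v : Fin n → R)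
    (l : List ℕ) : φ (evalCodes v l) = evalCodes (φ ∘ v) l := by
  simp [evalCodes, map_list_sum, Function.comp_def, map_powerProduct]

theorem evalCodes_cons (v : Fin n → R) (k : ℕ) (l : List ℕ) :
    evalCodes v (k :: l) = powerProduct v (decimalExponents k) + evalCodes v l := rfl

theorem evalCodes_congr {v w : Fin n → R} {l : List ℕ}
    (h : ∀ k ∈ l, (∃ j, v j = 0 ∧ w j = 0 ∧ decimalExponents k j ≠ 0) ∨
      ∀ i, decimalExponents k i ≠ 0 → v i = w i) : evalCodes v l = evalCodes w l := by
  refine congrArg List.sum (List.map_congr_left fun k hk => ?_)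
  rcases h k hk with ⟨j, hvj, hwj, hj⟩ | h_eq
  · have prod_eq_zero {u : Fin n → R} (hu : u j = 0) : powerProduct u (decimalExponents k) = 0 :=
      Finset.prod_eq_zero (Finset.mem_univ j) (by rw [hu, zero_pow hj])
    rw [prod_eq_zero hvj, prod_eq_zero hwj]
  · refine Finset.prod_congr rfl fun i _ => ?_
    by_cases hi : decimalExponents k i = 0
    · rw [hi, pow_zero, pow_zero]
    · rw [h_eq i hi]

theorem isHomogeneous_powerProduct {σ : Type*} {v : Fin n → MvPolynomial σ R} {w : Fin n → ℕ}
    (hv : ∀ i, (v i).IsHomogeneous (w i)) (m : Fin n → ℕ) :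
    (powerProduct v m).IsHomogeneous (weightedDegree w m) :=
  IsHomogeneous.prod _ _ _ fun i _ => (hv i).pow (m i)

theorem isHomogeneous_evalCodes {σ : Type*} {v : Fin n → MvPolynomial σ R} {w : Fin n → ℕ}
    (hv : ∀ i, (v i).IsHomogeneous (w i)) {d : ℕ} {l : List ℕ} (hl : AllCodesOfDegree w d l) :
    (evalCodes v l).IsHomogeneous d := by
  induction l with
  | nil => exact isHomogeneous_zero _ _ _
  | cons k l ih =>
    rw [AllCodesOfDegree, List.forall_mem_cons] at hl
    exact (hl.1 ▸ isHomogeneous_powerProduct hv _).add (ih hl.2)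

end DecimalCodes

/-! ### Kronecker substitution -/

section Kronecker

/-- The weights `1, b, b ^ 2, …, b ^ (n - 1), 0` of the Kronecker substitution in base `b`. The last
variable may be sent to `1` because the substitution is applied to homogeneous polynomials. -/
def kroneckerWeight (b n : ℕ) (i : Fin (n + 1)) : ℕ := if (i : ℕ) = n then 0 else b ^ (i : ℕ)

/-- The Kronecker substitution in base `b`. -/
noncomputable def kroneckerHom (R : Type*) [CommSemiring R] (b n : ℕ) :
    MvPolynomial (Fin (n + 1)) R →ₐ[R] Polynomial R :=
  aeval fun i => Polynomial.X ^ kroneckerWeight b n i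

variable {R : Type*} [CommSemiring R] {b n : ℕ}

theorem weightedDegree_kroneckerWeight (m : Fin (n + 1) → ℕ) :
    weightedDegree (kroneckerWeight b n) m = ∑ i : Fin n, m i.castSucc * b ^ (i : ℕ) := by
  rw [weightedDegree, Fin.sum_univ_castSucc]
  simp [kroneckerWeight, (Fin.is_lt _).ne, mul_comm]

theorem weightedDegree_kroneckerWeight_injOn {d : ℕ} (hd : d < b) :
    Set.InjOn (weightedDegree (kroneckerWeight b n)) {m | ∑ i, m i = d} := by
  intro m hm m' hm' h
  have digit_lt {u : Fin (n + 1) → ℕ} (hu : ∑ i, u i = d) (i) : u i < b :=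
    (Finset.single_le_sum (fun _ _ => Nat.zero_le _) (Finset.mem_univ i)).trans_lt (hu ▸ hd)
  have h_init : (fun i : Fin n => (⟨m i.castSucc, digit_lt hm _⟩ : Fin b)) =
      fun i => ⟨m' i.castSucc, digit_lt hm' _⟩ := by
    apply finFunctionFinEquiv.injective
    apply Fin.ext
    simpa only [finFunctionFinEquiv_apply, weightedDegree_kroneckerWeight] using h
  have h_castSucc (i : Fin n) : m i.castSucc = m' i.castSucc := congrArg Fin.val (congrFun h_init i)
  have h_sum : ∑ i, m i = ∑ i, m' i := hm.trans hm'.symm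
  rw [Fin.sum_univ_castSucc, Fin.sum_univ_castSucc,
    Finset.sum_congr rfl fun i _ => h_castSucc i] at h_sum
  exact funext <| Fin.lastCases (Nat.add_left_cancel h_sum) h_castSucc

theorem kroneckerHom_monomial (m : Fin (n + 1) →₀ ℕ) (r : R) :
    kroneckerHom R b n (monomial m r) =
      Polynomial.monomial (weightedDegree (kroneckerWeight b n) m) r := by
  rw [kroneckerHom, aeval_monomial, Finsupp.prod_fintype _ _ (by simp)]
  simp_rw [← pow_mul, Finset.prod_pow_eq_pow_sum]
  exact Polynomial.C_mul_X_pow_eq_monomial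

theorem coeff_kroneckerHom {d : ℕ} (hd : d < b) {p : MvPolynomial (Fin (n + 1)) R}
    (hp : p.IsHomogeneous d) {m : Fin (n + 1) →₀ ℕ} (hm : ∑ i, m i = d) :
    (kroneckerHom R b n p).coeff (weightedDegree (kroneckerWeight b n) m) = coeff m p := by
  conv_lhs => rw [p.as_sum]
  simp only [map_sum, kroneckerHom_monomial, Polynomial.finsetSum_coeff, Polynomial.coeff_monomial]
  rw [Finset.sum_eq_single m]
  · simp
  · intro m' hm' hne
    refine if_neg fun h => hne (DFunLike.coe_injective ?_)
    refine weightedDegree_kroneckerWeight_injOn hd ?_ hm h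
    simpa [Finsupp.weight_apply, Finsupp.sum_fintype] using hp (mem_support_iff.mp hm')
  · simp

theorem kroneckerHom_inj {d : ℕ} (hd : d < b) {p q : MvPolynomial (Fin (n + 1)) R}
    (hp : p.IsHomogeneous d) (hq : q.IsHomogeneous d)
    (h : kroneckerHom R b n p = kroneckerHom R b n q) : p = q := by
  ext m
  by_cases hm : ∑ i, m i = d
  · rw [← coeff_kroneckerHom hd hp hm, h, coeff_kroneckerHom hd hq hm]
  · have hm' : m.degree ≠ d := by rwa [Finsupp.degree_eq_sum]
    rw [hp.coeff_eq_zero hm', hq.coeff_eq_zero hm']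

end Kronecker

/-! ### Binary polynomials as natural numbers -/

section BitArithmetic

/-- The polynomial over `𝔽₂` whose coefficients are the binary digits of `a`. -/
noncomputable def bitPoly (a : ℕ) : Polynomial F2 :=
  ∑ i ∈ Finset.range a.size, if a.testBit i then Polynomial.X ^ i else 0

/-- The polynomial over `𝔽₂` with the exponents listed in `l`. -/
noncomputable def exponentPoly (l : List ℕ) : Polynomial F2 :=
  (l.map fun k => Polynomial.X ^ k).sum

/-- The binary encoding of `exponentPoly l * bitPoly a`. -/
def bitMul (l : List ℕ) (a : ℕ) : ℕ := l.foldr (fun k r => (a <<< k) ^^^ r) 0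

/-- The binary encoding of `powerProduct (fun i => exponentPoly (v i)) (decimalExponents k)`. -/
def bitPowerProduct : {n : ℕ} → (Fin n → List ℕ) → ℕ → ℕ
  | 0, _, _ => 1
  | _ + 1, v, k => (bitMul (v 0))^[k % 10] (bitPowerProduct (fun i => v i.succ) (k / 10))

/-- The binary encoding of `evalCodes (fun i => exponentPoly (v i)) l`. -/
def bitEvalCodes {n : ℕ} (v : Fin n → List ℕ) (l : List ℕ) : ℕ :=
  l.foldr (fun k r => bitPowerProduct v k ^^^ r) 0

theorem bitPoly_coeff (a i : ℕ) : (bitPoly a).coeff i = if a.testBit i then 1 else 0 := by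
  have h_term (j : ℕ) : (if a.testBit j then (Polynomial.X ^ j : Polynomial F2) else 0).coeff i =
      if i = j then (if a.testBit j then 1 else 0) else 0 := by
    split_ifs <;> simp_all [Polynomial.coeff_X_pow]
  simp only [bitPoly, Polynomial.finsetSum_coeff, h_term, Finset.sum_ite_eq, Finset.mem_range]
  refine ite_eq_left_iff.mpr fun h => (if_neg fun hi => h ?_).symm
  exact Nat.lt_size.mpr (Nat.ge_two_pow_of_testBit hi)

theorem bitPoly_zero : bitPoly 0 = 0 := by simp [bitPoly]

theorem bitPoly_one : bitPoly 1 = 1 := by simp [bitPoly]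

theorem bitPoly_xor (a b : ℕ) : bitPoly (a ^^^ b) = bitPoly a + bitPoly b := by
  ext i
  rw [Polynomial.coeff_add, bitPoly_coeff, bitPoly_coeff, bitPoly_coeff, Nat.testBit_xor]
  cases a.testBit i <;> cases b.testBit i <;> decide

theorem bitPoly_shiftLeft (a k : ℕ) : bitPoly (a <<< k) = Polynomial.X ^ k * bitPoly a := by
  ext i
  rw [Polynomial.coeff_X_pow_mul', bitPoly_coeff, bitPoly_coeff, Nat.testBit_shiftLeft]
  by_cases h : k ≤ i <;> simp [h]

theorem bitPoly_bitMul (l : List ℕ) (a : ℕ) :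
    bitPoly (bitMul l a) = exponentPoly l * bitPoly a := by
  induction l with
  | nil => simp [bitMul, exponentPoly, bitPoly_zero]
  | cons k l ih =>
    rw [bitMul, List.foldr_cons, ← bitMul, bitPoly_xor, bitPoly_shiftLeft, ih]
    simp only [exponentPoly, List.map_cons, List.sum_cons, add_mul]

theorem bitPoly_iterate_bitMul (l : List ℕ) (e a : ℕ) :
    bitPoly ((bitMul l)^[e] a) = exponentPoly l ^ e * bitPoly a := by
  induction e with
  | zero => simp
  | succ e ih => rw [Function.iterate_succ_apply', bitPoly_bitMul, ih, pow_succ', mul_assoc]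

theorem bitPoly_bitPowerProduct {n : ℕ} (v : Fin n → List ℕ) (k : ℕ) :
    bitPoly (bitPowerProduct v k) =
      powerProduct (fun i => exponentPoly (v i)) (decimalExponents k) := by
  induction n generalizing k with
  | zero => exact bitPoly_one
  | succ n ih =>
    rw [bitPowerProduct, bitPoly_iterate_bitMul, ih]
    simp only [powerProduct, Fin.prod_univ_succ, decimalExponents_succ]
    simp [decimalExponents]

theorem bitPoly_bitEvalCodes {n : ℕ} (v : Fin n → List ℕ) (l : List ℕ) :
    bitPoly (bitEvalCodes v l) = evalCodes (fun i => exponentPoly (v i)) l := by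
  induction l with
  | nil => exact bitPoly_zero
  | cons k l ih =>
    rw [bitEvalCodes, List.foldr_cons, ← bitEvalCodes, bitPoly_xor, bitPoly_bitPowerProduct, ih,
      evalCodes_cons]

/-- The exponents of the Kronecker substitution of the polynomial in `n + 1` variables with the
codes in `l`. -/
def kroneckerExponents (b n : ℕ) (l : List ℕ) : List ℕ :=
  l.map fun k => weightedDegree (kroneckerWeight b n) (decimalExponents k)

theorem kroneckerHom_evalCodes_X (b n : ℕ) (l : List ℕ) :
    kroneckerHom F2 b n (evalCodes X l) = exponentPoly (kroneckerExponents b n l) := by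
  rw [map_evalCodes, evalCodes, exponentPoly, kroneckerExponents, List.map_map]
  congr 2
  ext1 k
  simp [powerProduct, kroneckerHom, weightedDegree, ← pow_mul, Finset.prod_pow_eq_pow_sum]

theorem kroneckerHom_evalCodes {n N : ℕ} (b : ℕ) (c : Fin N → List ℕ) (l : List ℕ) :
    kroneckerHom F2 b n (evalCodes (fun i => evalCodes X (c i)) l) =
      bitPoly (bitEvalCodes (fun i => kroneckerExponents b n (c i)) l) := by
  simp only [bitPoly_bitEvalCodes, map_evalCodes (kroneckerHom F2 b n), Function.comp_def,
    ← kroneckerHom_evalCodes_X]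

theorem isHomogeneous_evalCodes_evalCodes_X {n N : ℕ} {c : Fin N → List ℕ} {w : Fin N → ℕ}
    (hc : ∀ i, AllCodesOfDegree (1 : Fin n → ℕ) (w i) (c i)) {d : ℕ} {l : List ℕ}
    (hl : AllCodesOfDegree w d l) :
    (evalCodes (fun i => evalCodes X (c i)) l : MvPolynomial (Fin n) F2).IsHomogeneous d :=
  isHomogeneous_evalCodes (fun i => isHomogeneous_evalCodes (isHomogeneous_X _) (hc i)) hl

theorem evalCodes_eq_evalCodes_of_bitEvalCodes_eq {n N N' : ℕ} (b : ℕ)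
    {c : Fin N → List ℕ} {w : Fin N → ℕ}
    (hc : ∀ i, AllCodesOfDegree (1 : Fin (n + 1) → ℕ) (w i) (c i))
    {c' : Fin N' → List ℕ} {w' : Fin N' → ℕ}
    (hc' : ∀ i, AllCodesOfDegree (1 : Fin (n + 1) → ℕ) (w' i) (c' i))
    {d : ℕ} (hd : d < b) {l l' : List ℕ} (hl : AllCodesOfDegree w d l)
    (hl' : AllCodesOfDegree w' d l')
    (h : bitEvalCodes (fun i => kroneckerExponents b n (c i)) l =
      bitEvalCodes (fun i => kroneckerExponents b n (c' i)) l') :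
    evalCodes (fun i => evalCodes X (c i)) l =
      (evalCodes (fun i => evalCodes X (c' i)) l' : MvPolynomial (Fin (n + 1)) F2) := by
  refine kroneckerHom_inj hd (isHomogeneous_evalCodes_evalCodes_X hc hl)
    (isHomogeneous_evalCodes_evalCodes_X hc' hl') ?_
  rw [kroneckerHom_evalCodes, kroneckerHom_evalCodes, h]

end BitArithmetic

/-! ### The generators and their relations -/

section Generators

/-- The invariant `q₂ = ae + bf + cd + …` of degree `2`. -/
def q2Codes : List ℕ :=
  [1100, 2000, 10001, 11000, 20000, 100010, 101000, 110000, 200000]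

/-- The invariant `q₃ = ae² + bf² + cd² + def`. -/
def q3Codes : List ℕ :=
  [2100, 20001, 111000, 200010]

/-- The invariant `r₃ = a²e + b²f + c²d + …` of degree `3`. -/
def r3Codes : List ℕ :=
  [1200, 10002, 12000, 21000, 100020, 102000, 111000, 120000, 201000, 210000]

/-- An invariant `e₄` that reduces modulo `(d, e, f)` to the Dickson invariant of degree `4` in
`a, b, c`. -/
def e4Codes : List ℕ :=
  [4, 22, 40, 112, 121, 202, 211, 220, 400, 1102, 1120, 1201, 1210, 1300, 2002, 2020, 2101, 2110,
   10003, 10012, 10021, 10102, 10201, 11002, 11020, 11101, 11200, 12010, 20011, 20020, 20101,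
   20200, 21010, 100012, 100021, 100030, 100120, 100210, 101002, 101020, 101110, 101200, 102001,
   110002, 110011, 110020, 110200, 111001, 111010, 111100, 120100, 200002, 200011, 200110,
   200200, 201001, 210100]

/-- An invariant `e₆` that reduces modulo `(d, e, f)` to the Dickson invariant of degree `6` in
`a, b, c`. -/
def e6Codes : List ℕ :=
  [24, 42, 114, 141, 204, 222, 240, 402, 411, 420, 1104, 1140, 1401, 1410, 1500, 2004, 2040,
   2202, 2220, 3300, 4002, 4020, 4101, 4110, 10005, 10014, 10041, 10104, 10401, 11004, 11040,
   11202, 11400, 12102, 13200, 14010, 20022, 20040, 20202, 20400, 21201, 22020, 22101, 30003,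
   31002, 40011, 40020, 40101, 40200, 41010, 100014, 100041, 100050, 100140, 100410, 101004,
   101040, 101220, 101400, 102120, 103200, 104001, 110004, 110022, 110040, 110400, 112002,
   112020, 113100, 120021, 121020, 121200, 122010, 130002, 131001, 140100, 200004, 200022,
   200220, 200400, 201210, 202002, 202110, 210012, 211002, 211200, 212001, 220011, 220200,
   221100, 300030, 301020, 310020, 311010, 400002, 400011, 400110, 400200, 401001, 410100]

/-- An invariant `e₇` that reduces modulo `(d, e, f)` to the Dickson invariant of degree `7` in
`a, b, c`. -/
def e7Codes : List ℕ :=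
  [124, 142, 214, 241, 412, 421, 1222, 1312, 1321, 1411, 2122, 2212, 2221, 2311, 10114, 10123,
   10213, 10222, 11122, 11221, 12112, 12211, 20113, 20122, 20212, 20221, 21112, 21211, 100132,
   100141, 100222, 100231, 101122, 101212, 102121, 102211, 110212, 110221, 111112, 111121,
   111211, 112111, 120112, 120121, 121111, 200122, 200131, 200212, 200221, 201121, 201211,
   210112, 210121, 211111]

/-- The Dickson invariant `d₄` of degree `4` in `d, e, f`. -/
def d4Codes : List ℕ :=
  [4000, 22000, 40000, 112000, 121000, 202000, 211000, 220000, 400000]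

/-- The invariant `q₅ = ae⁴ + bf⁴ + cd⁴ + …` of degree `5`. -/
def q5Codes : List ℕ :=
  [4100, 40001, 122000, 212000, 221000, 400010]

/-- The invariant `r₅ = a⁴e + b⁴f + c⁴d + …` of degree `5`. -/
def r5Codes : List ℕ :=
  [1400, 10004, 14000, 41000, 100040, 104000, 122000, 140000, 212000, 221000, 401000, 410000]

/-- The Dickson invariant `d₆` of degree `6` in `d, e, f`. -/
def d6Codes : List ℕ :=
  [24000, 42000, 114000, 141000, 204000, 222000, 240000, 402000, 411000, 420000]

/-- The Dickson invariant `d₇` of degree `7` in `d, e, f`, the product of the seven nonzero linear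
forms in `d, e, f`. -/
def d7Codes : List ℕ :=
  [124000, 142000, 214000, 241000, 412000, 421000]

/-- The codes of the eleven generators. The first six are the parameters. -/
def generatorCodes : Fin 11 → List ℕ :=
  ![q2Codes, q3Codes, r3Codes, e4Codes, e6Codes, e7Codes, d4Codes, q5Codes, r5Codes, d6Codes,
    d7Codes]

/-- The degrees of the eleven generators. -/
def generatorDegree : Fin 11 → ℕ := ![2, 3, 3, 4, 6, 7, 4, 5, 5, 6, 7]

/-- Relations among the generators, found by computer algebra, that rewrite power products modulo
`d₇`. An entry `(k, l)` states that the power product with code `k` is the sum of the power products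
with codes in `l`. -/
def relationsModD7 : List (ℕ × List ℕ) :=
  [(40,
    [1000004, 3000000, 1000000200, 2000000000, 10100000000]),
   (1100000,
    [14, 121, 211, 301, 1012, 1000102, 1001010, 2000010, 2000100, 10000003, 10000020, 10000110,
     10000200, 10001001, 10010000, 11000001, 100000003, 100000110, 101000001, 1000000101,
     1010000000, 10001000000]),
   (10100000,
    [6, 23, 113, 203, 220, 310, 400, 1004, 1021, 10020, 1000004, 1000021, 1000111, 1000201,
     2000002, 2001000, 3000000, 10000012, 11000010, 100000012, 101000010, 1000000003, 1000000020,
     1000000110, 1001000001, 2000000000, 10000000101, 10010000000, 10100000000]),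
   (20000000,
    [1000020, 1000000002, 1001000000, 10000000100]),
   (100000030,
    [7, 24, 114, 131, 221, 1000022, 2000003, 2000110, 10000013, 10000030, 10000103, 10000210,
     10000300, 11000011, 11000101, 110000002, 111000000, 1000000004, 1000000021, 1000000201,
     1002000000, 1010000010, 1010000100, 2000000001, 10000000012, 10000100000, 10001000010,
     10010000001, 10100000001, 20000000000]),
   (110000010,
    [15, 32, 122, 1000013, 1000103, 1000120, 1000210, 1000300, 2000101, 10000021, 10000111,
     10000201, 11000002, 12000000, 101000002, 102000000, 1000000012, 1001000100, 1010000001,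
     10000000003, 10000000020, 10000000110, 10000000200, 10000001001, 10000010000, 11000000000]),
   (200000000,
    [5, 112, 1003, 1200, 10002, 100010, 1000003, 1000110, 1000200, 1001001, 1010000, 10000011,
     100000011, 100000101, 110000000, 1000001000, 1001000000, 10000000010]),
   (1000010000,
    [113, 130, 220, 1000004, 1000111, 1001002, 2000002, 2001000, 10000012, 10001010, 101000010,
     101000100, 110000001, 1000000003, 1000000020, 1000000200, 1000001001, 2000000000]),
   (1000100000,
    [15, 105, 212, 1030, 1000013, 1000103, 1000300, 10000004, 10000021, 10000111, 10000201,
     10001002, 11001000, 12000000, 100000021, 101000002, 102000000, 110000100, 1000000102,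
     1001000010, 10000000003, 10000000020, 10000000110, 10000000200, 10000001001, 10000010000]),
   (1100000000,
    [31, 1000012, 1000102, 2000010, 2000100, 10000003, 10000020, 10000110, 11000001, 1000000011,
     1000000101, 1010000000, 10000000002, 10000001000])]

/-- Relations among the generators, encoded as in `relationsModD7`, that bound the exponents of the
last five generators over the parameters. -/
def relationsOverParameters : List (ℕ × List ℕ) :=
  [(3000000,
    [40, 113, 130, 220, 1000111, 1001002, 2000002, 2001000, 10000012, 10001010, 101000010,
     101000100, 110000001, 1000000003, 1000000020, 1000001001, 1000010000, 10100000000]),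
   (20000000,
    [1000020, 1000000002, 1001000000, 10000000100]),
   (200000000,
    [5, 112, 1003, 1200, 10002, 100010, 1000003, 1000110, 1000200, 1001001, 1010000, 10000011,
     100000011, 100000101, 110000000, 1000001000, 1001000000, 10000000010]),
   (2000000000,
    [113, 130, 220, 1000004, 1000111, 1001002, 2000002, 2001000, 10000012, 10001010, 101000010,
     101000100, 110000001, 1000000003, 1000000020, 1000000200, 1000001001, 1000010000]),
   (20000000000,
    [24, 41, 114, 131, 204, 401, 1005, 10021, 1000005, 1000112, 1000202, 1001003, 1001020,
     1100010, 2000003, 2000020, 10000103, 10000120, 10000300, 10010010, 10100001, 11000011,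
     11000101, 100000030, 100000120, 101000011, 101000101, 111000000, 1000000004, 1000000021,
     1000000201, 1000001002, 1000010001, 1001000002, 1002000000, 1010000100, 10000000012,
     10000000102, 10000100000, 10100000001])]

/-- The polynomial ring `S[W'^*] = 𝔽₂[a, b, c, d, e, f]`. -/
abbrev S6 := MvPolynomial (Fin 6) F2

/-- The eleven generators of the invariant ring. -/
noncomputable def generator (i : Fin 11) : S6 := evalCodes X (generatorCodes i)

/-- The family `v` satisfies the relations listed in `rels`. -/
def SatisfiesRelations {n : ℕ} {S : Type*} [CommSemiring S] (v : Fin n → S)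
    (rels : List (ℕ × List ℕ)) : Prop :=
  ∀ r ∈ rels, powerProduct v (decimalExponents r.1) = evalCodes v r.2

theorem SatisfiesRelations.map {n : ℕ} {R T F : Type*} [CommSemiring R] [CommSemiring T]
    [FunLike F R T] [RingHomClass F R T] {v : Fin n → R} {rels : List (ℕ × List ℕ)}
    (hv : SatisfiesRelations v rels) (φ : F) : SatisfiesRelations (φ ∘ v) rels := fun r hr => by
  rw [← map_powerProduct, hv r hr, map_evalCodes]

theorem SatisfiesRelations.of_map {n : ℕ} {R T F : Type*} [CommSemiring R] [CommSemiring T]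
    [FunLike F R T] [RingHomClass F R T] {φ : F} (hφ : Function.Injective φ) {v : Fin n → R}
    {rels : List (ℕ × List ℕ)} (h : SatisfiesRelations (φ ∘ v) rels) : SatisfiesRelations v rels :=
  fun r hr => hφ <| by rw [map_powerProduct, h r hr, map_evalCodes]

theorem allCodesOfDegree_generatorCodes (i : Fin 11) :
    AllCodesOfDegree (1 : Fin 6 → ℕ) (generatorDegree i) (generatorCodes i) := by
  revert i
  decide +kernel

theorem generator_isHomogeneous (i : Fin 11) :
    (generator i).IsHomogeneous (generatorDegree i) :=
  isHomogeneous_evalCodes (isHomogeneous_X _) (allCodesOfDegree_generatorCodes i)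

theorem generator_satisfiesRelations_of_bitEvalCodes_eq {rels : List (ℕ × List ℕ)}
    (h : ∀ r ∈ rels, ∃ d < 15, AllCodesOfDegree generatorDegree d (r.1 :: r.2) ∧
      bitEvalCodes (fun i => kroneckerExponents 15 5 (generatorCodes i)) [r.1] =
        bitEvalCodes (fun i => kroneckerExponents 15 5 (generatorCodes i)) r.2) :
    SatisfiesRelations generator rels := by
  intro r hr
  obtain ⟨d, hd, hdeg, hbit⟩ := h r hr
  rw [AllCodesOfDegree, List.forall_mem_cons] at hdeg
  have h_eq := evalCodes_eq_evalCodes_of_bitEvalCodes_eq 15 allCodesOfDegree_generatorCodes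
    allCodesOfDegree_generatorCodes hd (List.forall_mem_singleton.mpr hdeg.1) hdeg.2 hbit
  rwa [evalCodes_cons, evalCodes, List.map_nil, List.sum_nil, add_zero] at h_eq

theorem generator_satisfiesRelations_modD7 : SatisfiesRelations generator relationsModD7 :=
  generator_satisfiesRelations_of_bitEvalCodes_eq (by decide +kernel)

theorem generator_satisfiesRelations_overParameters :
    SatisfiesRelations generator relationsOverParameters :=
  generator_satisfiesRelations_of_bitEvalCodes_eq (by decide +kernel)

/-- The substitution of `A`. -/
noncomputable def substA : S6 →ₐ[F2] S6 :=
  aeval ![X 0 + X 2 + X 5, X 1, X 2, X 3 + X 4, X 4, X 5]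

/-- The substitution of `B`. -/
noncomputable def substB : S6 →ₐ[F2] S6 := aeval ![X 2, X 0, X 1, X 5, X 3, X 4]

theorem decimalExponents_ten_pow (j k : Fin 6) :
    decimalExponents (10 ^ (j : ℕ)) k = if k = j then 1 else 0 := by
  revert j k
  decide

theorem aeval_generator_of_bitEvalCodes_eq {v : Fin 6 → S6} (c : Fin 6 → List ℕ)
    (hv : ∀ j, v j = evalCodes X (c j)) (hc : ∀ j, AllCodesOfDegree (1 : Fin 6 → ℕ) 1 (c j))
    (h : ∀ i, bitEvalCodes (fun j => kroneckerExponents 15 5 (c j)) (generatorCodes i) =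
      bitEvalCodes (fun j : Fin 6 => kroneckerExponents 15 5 [10 ^ (j : ℕ)]) (generatorCodes i))
    (i : Fin 11) : aeval v (generator i) = generator i := by
  have h_deg : generatorDegree i < 15 := by revert i; decide
  have hX : ∀ j : Fin 6, AllCodesOfDegree (1 : Fin 6 → ℕ) 1 [10 ^ (j : ℕ)] := by decide +kernel
  have h_eq := evalCodes_eq_evalCodes_of_bitEvalCodes_eq 15 (w := 1) (w' := 1) hc hX h_deg
    (allCodesOfDegree_generatorCodes i) (allCodesOfDegree_generatorCodes i) (h i)
  have h_var (j : Fin 6) : (evalCodes X [10 ^ (j : ℕ)] : S6) = X j := by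
    simp [evalCodes, powerProduct, decimalExponents_ten_pow]
  simp only [h_var, ← hv] at h_eq
  rw [generator, map_evalCodes]
  simpa only [Function.comp_def, aeval_X] using h_eq

theorem substA_generator (i : Fin 11) : substA (generator i) = generator i := by
  refine aeval_generator_of_bitEvalCodes_eq
    ![[1, 100, 100000], [10], [100], [1000, 10000], [10000], [100000]] (fun j => ?_)
    (by decide +kernel) (by decide +kernel) i
  fin_cases j <;>
    simp [evalCodes, powerProduct, decimalExponents, Fin.prod_univ_six, add_assoc]

theorem substB_generator (i : Fin 11) : substB (generator i) = generator i := by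
  refine aeval_generator_of_bitEvalCodes_eq
    ![[100], [1], [10], [100000], [1000], [10000]] (fun j => ?_)
    (by decide +kernel) (by decide +kernel) i
  fin_cases j <;> simp [evalCodes, powerProduct, decimalExponents, Fin.prod_univ_six]

end Generators

/-! ### The group action -/

section GroupAction

theorem subgroup_eq_top_of_transvection_mem {n : Type*} [Fintype n] [DecidableEq n]
    (H : Subgroup (GL n F2))
    (h : ∀ i j, i ≠ j → ∃ g ∈ H, (g : Matrix n n F2) = Matrix.transvection i j 1) : H = ⊤ := by
  have eq_one_of_ne_zero : ∀ x : F2, x ≠ 0 → x = 1 := by decide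
  refine eq_top_iff.mpr fun g _ => ?_
  suffices ∃ g' ∈ H, (g' : Matrix n n F2) = g by
    obtain ⟨g', hg', h_eq⟩ := this
    rwa [← Units.ext h_eq]
  refine Matrix.diagonal_transvection_induction_of_det_ne_zero
    (fun M => ∃ g' ∈ H, (g' : Matrix n n F2) = M) g
    ((Matrix.isUnit_iff_isUnit_det _).mp g.isUnit).ne_zero ?_ ?_ ?_
  · intro D hD
    rw [Matrix.det_diagonal, Finset.prod_ne_zero_iff] at hD
    have hD_one : D = 1 := funext fun i => eq_one_of_ne_zero _ (hD i (Finset.mem_univ i))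
    exact ⟨1, H.one_mem, by rw [hD_one, Units.val_one, ← Matrix.diagonal_one]; rfl⟩
  · rintro ⟨i, j, hij, c⟩
    rcases eq_or_ne c 0 with rfl | hc
    · exact ⟨1, H.one_mem, by simp [Matrix.TransvectionStruct.toMatrix]⟩
    · rw [eq_one_of_ne_zero c hc]
      exact h i j hij
  · rintro M N _ _ ⟨g, hg, rfl⟩ ⟨g', hg', rfl⟩
    exact ⟨g * g', H.mul_mem hg hg', rfl⟩

theorem transvection_commutator (i j k : Fin 3) (hij : i ≠ j) (hjk : j ≠ k) (hik : i ≠ k) :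
    (Matrix.transvection i j 1 * Matrix.transvection j k 1 * Matrix.transvection i j 1 *
      Matrix.transvection j k 1 : Matrix (Fin 3) (Fin 3) F2) = Matrix.transvection i k 1 := by
  revert i j k
  decide +kernel

/-- Conjugation by the permutation matrix `B` turns `A = 1 + E₀₂` into `1 + E₁₀` and `1 + E₂₁`, and
commutators of these three give the other transvections. -/
theorem closure_Agen_Bgen : Subgroup.closure ({Agen, Bgen} : Set G3) = ⊤ := by
  set H := Subgroup.closure ({Agen, Bgen} : Set G3)
  have hA : Agen ∈ H := Subgroup.subset_closure (by simp)
  have hB : Bgen ∈ H := Subgroup.subset_closure (by simp)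
  have conj_mem {g : G3} (hg : g ∈ H) : Bgen * g * Bgen⁻¹ ∈ H :=
    H.mul_mem (H.mul_mem hB hg) (H.inv_mem hB)
  have h02 : ∃ g ∈ H, (g : Matrix (Fin 3) (Fin 3) F2) = Matrix.transvection 0 2 1 :=
    ⟨_, hA, by decide +kernel⟩
  have h10 : ∃ g ∈ H, (g : Matrix (Fin 3) (Fin 3) F2) = Matrix.transvection 1 0 1 :=
    ⟨_, conj_mem hA, by decide +kernel⟩
  have h21 : ∃ g ∈ H, (g : Matrix (Fin 3) (Fin 3) F2) = Matrix.transvection 2 1 1 :=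
    ⟨_, conj_mem (conj_mem hA), by decide +kernel⟩
  have h_comm {i j k : Fin 3} (hij : i ≠ j) (hjk : j ≠ k) (hik : i ≠ k) :
      (∃ g ∈ H, (g : Matrix (Fin 3) (Fin 3) F2) = Matrix.transvection i j 1) →
      (∃ g ∈ H, (g : Matrix (Fin 3) (Fin 3) F2) = Matrix.transvection j k 1) →
      ∃ g ∈ H, (g : Matrix (Fin 3) (Fin 3) F2) = Matrix.transvection i k 1 := by
    rintro ⟨g, hg, hg_eq⟩ ⟨g', hg', hg'_eq⟩
    refine ⟨g * g' * g * g', H.mul_mem (H.mul_mem (H.mul_mem hg hg') hg) hg', ?_⟩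
    simp only [Units.val_mul, hg_eq, hg'_eq, transvection_commutator i j k hij hjk hik]
  have h01 := h_comm (by decide) (by decide) (by decide) h02 h21
  have h12 := h_comm (by decide) (by decide) (by decide) h10 h02
  have h20 := h_comm (by decide) (by decide) (by decide) h21 h10
  refine subgroup_eq_top_of_transvection_mem H fun
    | 0, 0, h | 1, 1, h | 2, 2, h => absurd rfl h
    | 0, 1, _ => h01
    | 0, 2, _ => h02
    | 1, 0, _ => h10
    | 1, 2, _ => h12
    | 2, 0, _ => h20
    | 2, 1, _ => h21

variable (D : G3 →* GL (Fin 6) F2)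

theorem polyAct_X (σ : G3) (i : Fin 6) :
    polyAct D σ (X i) = ∑ j, (D σ : Matrix (Fin 6) (Fin 6) F2) i j • X j := aeval_X _ _

theorem polyAct_mul (σ τ : G3) : polyAct D (σ * τ) = (polyAct D τ).comp (polyAct D σ) := by
  ext1 i
  simp only [AlgHom.comp_apply, polyAct_X, map_sum, map_smul, Finset.smul_sum, smul_smul, map_mul,
    Units.val_mul, Matrix.mul_apply, Finset.sum_smul]
  exact Finset.sum_comm

theorem polyAct_one : polyAct D 1 = AlgHom.id F2 S6 := by
  ext1 i
  simp [polyAct_X, Matrix.one_apply]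

theorem polyAct_Agen (hA : (D Agen : Matrix (Fin 6) (Fin 6) F2) = DA6) :
    polyAct D Agen = substA := by
  ext1 i
  rw [polyAct_X, hA, substA, aeval_X]
  fin_cases i <;> simp [Fin.sum_univ_six, DA6]

theorem polyAct_Bgen (hB : (D Bgen : Matrix (Fin 6) (Fin 6) F2) = DB6) :
    polyAct D Bgen = substB := by
  ext1 i
  rw [polyAct_X, hB, substB, aeval_X]
  fin_cases i <;> simp [Fin.sum_univ_six, DB6]

theorem mem_invG_iff (hA : (D Agen : Matrix (Fin 6) (Fin 6) F2) = DA6)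
    (hB : (D Bgen : Matrix (Fin 6) (Fin 6) F2) = DB6) (p : S6) :
    p ∈ invG D ↔ substA p = p ∧ substB p = p := by
  rw [← polyAct_Agen D hA, ← polyAct_Bgen D hB]
  refine ⟨fun h => ⟨h Agen trivial, h Bgen trivial⟩, fun ⟨h_A, h_B⟩ σ _ => ?_⟩
  have hσ : σ ∈ Subgroup.closure {Agen, Bgen} := closure_Agen_Bgen ▸ Subgroup.mem_top σ
  induction hσ using Subgroup.closure_induction with
  | mem τ hτ =>
    rcases hτ with rfl | rfl
    exacts [h_A, h_B]
  | one => simp [polyAct_one]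
  | mul σ τ _ _ hσ hτ => rw [polyAct_mul, AlgHom.comp_apply, hσ trivial, hτ trivial]
  | inv σ _ hσ =>
    calc polyAct D σ⁻¹ p = polyAct D σ⁻¹ (polyAct D σ p) := by rw [hσ trivial]
      _ = p := by rw [← AlgHom.comp_apply, ← polyAct_mul, mul_inv_cancel, polyAct_one,
        AlgHom.id_apply]

/-- The right action of `G` on `S[W'^*]`, as a left action of the opposite group. -/
@[reducible]
noncomputable def polyActMulSemiringAction : MulSemiringAction G3ᵐᵒᵖ S6 where
  smul σ p := polyAct D σ.unop p
  one_smul p := DFunLike.congr_fun (polyAct_one D) p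
  mul_smul σ τ p := DFunLike.congr_fun (polyAct_mul D τ.unop σ.unop) p
  smul_zero σ := map_zero (polyAct D σ.unop)
  smul_add σ := map_add (polyAct D σ.unop)
  smul_one σ := map_one (polyAct D σ.unop)
  smul_mul σ := map_mul (polyAct D σ.unop)

theorem isIntegral_invG : Algebra.IsIntegral (invG D) S6 := by
  let := polyActMulSemiringAction D
  have : Algebra.IsInvariant (invG D) S6 G3ᵐᵒᵖ :=
    ⟨fun p hp => ⟨⟨p, fun σ _ => hp (MulOpposite.op σ)⟩, rfl⟩⟩
  have : Finite G3ᵐᵒᵖ := Finite.of_equiv G3 MulOpposite.opEquiv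
  exact Algebra.IsInvariant.isIntegral (invG D) S6 G3ᵐᵒᵖ

end GroupAction

theorem algebraicIndependent_of_finite_of_isIntegral {k : Type*} [Field k] {n : ℕ}
    {A : Subalgebra k (MvPolynomial (Fin n) k)} [Algebra.IsIntegral A (MvPolynomial (Fin n) k)]
    (f : Fin n → A) [Module.Finite (Algebra.adjoin k (Set.range f)) A] :
    AlgebraicIndependent k f := by
  have h_trdeg : Algebra.trdeg k A = n := by
    have h_add := trdeg_add_eq k A (A := MvPolynomial (Fin n) k)
    rwa [trdeg_eq_zero (R := A), add_zero, MvPolynomial.trdeg_of_isDomain,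
      Cardinal.mk_fin, Cardinal.lift_natCast] at h_add
  refine (Algebra.IsAlgebraic.isTranscendenceBasis_of_lift_le_trdeg_of_finite k f ?_).1
  simp [h_trdeg]

/-! ### The invariants after inverting `d₇` -/

section RootCounting

/-- Reducing a polynomial expression for `v` modulo `M` makes its degree smaller than the number of
conjugates of `x`, at all of which it takes the value `v`. -/
theorem mem_bot_of_forall_conjugate_fixed {C S ι : Type*} [CommRing C] [CommRing S] [IsDomain S]
    [Algebra C S] [Fintype ι] {M : Polynomial C} (hM : M.Monic) (hM_one : M ≠ 1)
    {x v : S} (hx : Polynomial.aeval x M = 0) (hv : v ∈ Algebra.adjoin C {x}) {φ : ι → S →ₐ[C] S}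
    (h_card : M.natDegree ≤ Fintype.card ι) (hφ_inj : Function.Injective fun i => φ i x)
    (hφv : ∀ i, φ i v = v) : v ∈ (⊥ : Subalgebra C S) := by
  rw [Algebra.adjoin_singleton_eq_range_aeval] at hv
  obtain ⟨Q, hQ : Polynomial.aeval x Q = v⟩ := hv
  set R := Q.modByMonic M
  have h_eval : Polynomial.aeval x R = v :=
    (Polynomial.aeval_modByMonic_eq_self_of_root hx).trans hQ
  have h_const : R.map (algebraMap C S) - Polynomial.C v = 0 := by
    refine Polynomial.eq_zero_of_natDegree_lt_card_of_eval_eq_zero _ hφ_inj (fun i => ?_) ?_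
    · rw [Polynomial.eval_sub, Polynomial.eval_map_algebraMap, Polynomial.aeval_algHom_apply,
        h_eval, hφv, Polynomial.eval_C, sub_self]
    · rw [Polynomial.natDegree_sub_C]
      exact Polynomial.natDegree_map_le.trans_lt
        ((Polynomial.natDegree_modByMonic_lt _ hM hM_one).trans_le h_card)
  refine Algebra.mem_bot.mpr ⟨R.coeff 0, ?_⟩
  rw [← Polynomial.coeff_map, sub_eq_zero.mp h_const, Polynomial.coeff_C_zero]

theorem mem_adjoin_of_forall_conjugate_fixed {k S : Type*} [CommRing k] [CommRing S] [IsDomain S]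
    [Algebra k S] {T : Set S} {n : ℕ} {x v : S} {c : Fin n → S}
    (hc : ∀ i, c i ∈ Algebra.adjoin k T) (hx : x ^ n + ∑ i, c i * x ^ (i : ℕ) = 0)
    (hv : v ∈ Algebra.adjoin k (T ∪ {x})) {φ : Fin n → S →ₐ[k] S}
    (hφ_inj : Function.Injective fun i => φ i x) (hφT : ∀ i, ∀ t ∈ T, φ i t = t)
    (hφv : ∀ i, φ i v = v) : v ∈ Algebra.adjoin k T := by
  set C := Algebra.adjoin k T
  let lower : Polynomial C := ∑ i : Fin n, Polynomial.C ⟨c i, hc i⟩ * Polynomial.X ^ (i : ℕ)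
  let M : Polynomial C := Polynomial.X ^ n + lower
  have h_lower : lower.degree < n := Polynomial.degree_sum_fin_lt _
  have hM : M.natDegree = n := by
    refine Polynomial.natDegree_eq_of_degree_eq_some ?_
    rw [Polynomial.degree_add_eq_left_of_degree_lt (by rwa [Polynomial.degree_X_pow]),
      Polynomial.degree_X_pow]
  have hM_root : Polynomial.aeval x M = 0 := by
    simpa [M, lower, Subalgebra.algebraMap_def] using hx
  have hM_one : M ≠ 1 := fun h => by
    rw [h, map_one] at hM_root
    exact one_ne_zero hM_root
  have hφC (i) (y : C) : φ i y = y :=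
    Algebra.adjoin_le (S := AlgHom.equalizer (φ i) (AlgHom.id k S)) (hφT i) y.2
  rw [Algebra.adjoin_union_eq_adjoin_adjoin] at hv
  have h_bot := mem_bot_of_forall_conjugate_fixed (Polynomial.monic_X_pow_add h_lower) hM_one
    hM_root hv (φ := fun i => { φ i with commutes' := hφC i })
    (hM.trans (Fintype.card_fin n).symm).le hφ_inj hφv
  obtain ⟨y, rfl⟩ := Algebra.mem_bot.mp h_bot
  exact y.2

end RootCounting

section Localization

/-- The generator `q₂`. -/
noncomputable abbrev q2 : S6 := generator 0

/-- The generator `q₃`. -/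
noncomputable abbrev q3 : S6 := generator 1

/-- The Dickson invariant `d₄`. -/
noncomputable abbrev d4 : S6 := generator 6

/-- The generator `q₅`. -/
noncomputable abbrev q5 : S6 := generator 7

/-- The Dickson invariant `d₆`. -/
noncomputable abbrev d6 : S6 := generator 9

/-- The Dickson invariant `d₇`. -/
noncomputable abbrev d7 : S6 := generator 10

theorem generator_eq (i : Fin 11) : generator i = ((generatorCodes i).map fun k =>
    X 0 ^ (k % 10) * X 1 ^ (k / 10 % 10) * X 2 ^ (k / 100 % 10) * X 3 ^ (k / 1000 % 10) *
      X 4 ^ (k / 10000 % 10) * X 5 ^ (k / 100000 % 10)).sum := by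
  simp [generator, evalCodes, powerProduct, decimalExponents, Fin.prod_univ_six]

theorem q2_eq : q2 = X 4 * X 0 + X 5 * X 1 + X 3 * X 2 +
    (X 3 ^ 2 + X 3 * X 4 + X 4 ^ 2 + X 3 * X 5 + X 4 * X 5 + X 5 ^ 2) := by
  simp only [q2, generator_eq, generatorCodes, q2Codes, Matrix.cons_val, List.map_cons,
    List.map_nil, List.sum_cons, List.sum_nil, Nat.reduceDiv, Nat.reduceMod]
  ring

theorem q3_eq : q3 = X 4 ^ 2 * X 0 + X 5 ^ 2 * X 1 + X 3 ^ 2 * X 2 + X 3 * X 4 * X 5 := by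
  simp only [q3, generator_eq, generatorCodes, q3Codes, Matrix.cons_val, List.map_cons,
    List.map_nil, List.sum_cons, List.sum_nil, Nat.reduceDiv, Nat.reduceMod]
  ring

theorem q5_eq : q5 = X 4 ^ 4 * X 0 + X 5 ^ 4 * X 1 + X 3 ^ 4 * X 2 +
    X 3 * X 4 * X 5 * (X 4 * X 5 + X 3 * X 5 + X 3 * X 4) := by
  simp only [q5, generator_eq, generatorCodes, q5Codes, Matrix.cons_val, List.map_cons,
    List.map_nil, List.sum_cons, List.sum_nil, Nat.reduceDiv, Nat.reduceMod]
  ring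

theorem d4_eq : d4 = (X 3 ^ 2 + X 3 * X 4 + X 4 ^ 2) ^ 2 + X 5 ^ 4 +
    (X 3 ^ 2 + X 3 * X 4 + X 4 ^ 2) * X 5 ^ 2 + X 3 * X 4 * (X 3 + X 4) * X 5 := by
  simp only [d4, generator_eq, generatorCodes, d4Codes, Matrix.cons_val, List.map_cons,
    List.map_nil, List.sum_cons, List.sum_nil, Nat.reduceDiv, Nat.reduceMod]
  grind

theorem d6_eq : d6 = (X 3 * X 4 * (X 3 + X 4)) ^ 2 +
    (X 5 ^ 4 + (X 3 ^ 2 + X 3 * X 4 + X 4 ^ 2) * X 5 ^ 2 + X 3 * X 4 * (X 3 + X 4) * X 5) *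
      (X 3 ^ 2 + X 3 * X 4 + X 4 ^ 2) := by
  simp only [d6, generator_eq, generatorCodes, d6Codes, Matrix.cons_val, List.map_cons,
    List.map_nil, List.sum_cons, List.sum_nil, Nat.reduceDiv, Nat.reduceMod]
  grind

theorem d7_eq : d7 = X 3 * X 4 ^ 2 * X 5 ^ 4 + X 3 * X 4 ^ 4 * X 5 ^ 2 + X 3 ^ 2 * X 4 * X 5 ^ 4 +
    X 3 ^ 2 * X 4 ^ 4 * X 5 + X 3 ^ 4 * X 4 * X 5 ^ 2 + X 3 ^ 4 * X 4 ^ 2 * X 5 := by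
  simp only [d7, generator_eq, generatorCodes, d7Codes, Matrix.cons_val, List.map_cons,
    List.map_nil, List.sum_cons, List.sum_nil, Nat.reduceDiv, Nat.reduceMod]
  ring

/-- The generators that suffice after inverting `d₇`. -/
def localizedGenerators : Set S6 := {q2, q3, d4, q5, d6, d7}

/-- The composite of the substitutions given by a word in `A` (`true`) and `B` (`false`). -/
noncomputable def substWord : List Bool → (S6 →ₐ[F2] S6)
  | [] => AlgHom.id F2 S6
  | true :: w => substA.comp (substWord w)
  | false :: w => substB.comp (substWord w)

theorem substWord_eq_self {p : S6} (hA : substA p = p) (hB : substB p = p) (w : List Bool) :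
    substWord w p = p := by
  induction w with
  | nil => rfl
  | cons b w ih => cases b <;> simp [substWord, ih, hA, hB]

theorem substWord_localizedGenerators (w : List Bool) {t : S6} (ht : t ∈ localizedGenerators) :
    substWord w t = t := by
  rcases ht with rfl | rfl | rfl | rfl | rfl | rfl <;>
    exact substWord_eq_self (substA_generator _) (substB_generator _) w

/-- The linear form `v₀ d + v₁ e + v₂ f`. -/
noncomputable def linearForm (v : Fin 3 → F2) : S6 := C (v 0) * X 3 + C (v 1) * X 4 + C (v 2) * X 5

theorem linearForm_injective : Function.Injective linearForm := by
  intro v w h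
  have h0 : v 0 = w 0 := by
    simpa [linearForm, coeff_X, Finsupp.single_left_inj] using congrArg (coeff (.single 3 1)) h
  have h1 : v 1 = w 1 := by
    simpa [linearForm, coeff_X, Finsupp.single_left_inj] using congrArg (coeff (.single 4 1)) h
  have h2 : v 2 = w 2 := by
    simpa [linearForm, coeff_X, Finsupp.single_left_inj] using congrArg (coeff (.single 5 1)) h
  ext i
  fin_cases i
  exacts [h0, h1, h2]

/-- The linear part `ae + bf + cd` of `q₂`. -/
noncomputable def linearPart2 : S6 :=
  q2 + (X 3 ^ 2 + X 3 * X 4 + X 4 ^ 2 + X 3 * X 5 + X 4 * X 5 + X 5 ^ 2)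

/-- The linear part `ae² + bf² + cd²` of `q₃`. -/
noncomputable def linearPart3 : S6 := q3 + X 3 * X 4 * X 5

/-- The linear part `ae⁴ + bf⁴ + cd⁴` of `q₅`. -/
noncomputable def linearPart5 : S6 :=
  q5 + X 3 * X 4 * X 5 * (X 4 * X 5 + X 3 * X 5 + X 3 * X 4)

/-- The combination of the linear parts that Cramer's rule forms from the `2 × 2` minors of the
matrix with rows `(x, y)`, `(x², y²)`, `(x⁴, y⁴)`. -/
noncomputable def cramerCombination (x y : S6) : S6 :=
  (x ^ 2 * y ^ 4 + x ^ 4 * y ^ 2) * linearPart2 + (x * y ^ 4 + x ^ 4 * y) * linearPart3 +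
    (x * y ^ 2 + x ^ 2 * y) * linearPart5

theorem d7_mul_X0 : d7 * X 0 = cramerCombination (X 3) (X 5) := by
  rw [cramerCombination, linearPart2, linearPart3, linearPart5, q2_eq, q3_eq, q5_eq, d7_eq]
  grind

theorem d7_mul_X1 : d7 * X 1 = cramerCombination (X 3) (X 4) := by
  rw [cramerCombination, linearPart2, linearPart3, linearPart5, q2_eq, q3_eq, q5_eq, d7_eq]
  grind

theorem d7_mul_X2 : d7 * X 2 = cramerCombination (X 4) (X 5) := by
  rw [cramerCombination, linearPart2, linearPart3, linearPart5, q2_eq, q3_eq, q5_eq, d7_eq]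
  grind

theorem d7_mul_X_mem_adjoin (i : Fin 6) :
    d7 * X i ∈ Algebra.adjoin F2 (localizedGenerators ∪ {X 3} ∪ {X 4} ∪ {X 5}) := by
  set C := Algebra.adjoin F2 (localizedGenerators ∪ {X 3} ∪ {X 4} ∪ {X 5} : Set S6)
  have hd : (X 3 : S6) ∈ C := Algebra.subset_adjoin (by simp)
  have he : (X 4 : S6) ∈ C := Algebra.subset_adjoin (by simp)
  have hf : (X 5 : S6) ∈ C := Algebra.subset_adjoin (by simp)
  have hq2 : q2 ∈ C := Algebra.subset_adjoin (by simp [localizedGenerators])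
  have hq3 : q3 ∈ C := Algebra.subset_adjoin (by simp [localizedGenerators])
  have hq5 : q5 ∈ C := Algebra.subset_adjoin (by simp [localizedGenerators])
  have hd7 : d7 ∈ C := Algebra.subset_adjoin (by simp [localizedGenerators])
  have h2 : linearPart2 ∈ C :=
    add_mem hq2 (add_mem (add_mem (add_mem (add_mem (add_mem (pow_mem hd 2) (mul_mem hd he))
      (pow_mem he 2)) (mul_mem hd hf)) (mul_mem he hf)) (pow_mem hf 2))
  have h3 : linearPart3 ∈ C := add_mem hq3 (mul_mem (mul_mem hd he) hf)
  have h5 : linearPart5 ∈ C := add_mem hq5 (mul_mem (mul_mem (mul_mem hd he) hf)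
    (add_mem (add_mem (mul_mem he hf) (mul_mem hd hf)) (mul_mem hd he)))
  have h_cramer {x y : S6} (hx : x ∈ C) (hy : y ∈ C) : cramerCombination x y ∈ C :=
    add_mem (add_mem
      (mul_mem (add_mem (mul_mem (pow_mem hx 2) (pow_mem hy 4))
        (mul_mem (pow_mem hx 4) (pow_mem hy 2))) h2)
      (mul_mem (add_mem (mul_mem hx (pow_mem hy 4)) (mul_mem (pow_mem hx 4) hy)) h3))
      (mul_mem (add_mem (mul_mem hx (pow_mem hy 2)) (mul_mem (pow_mem hx 2) hy)) h5)
  fin_cases i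
  exacts [d7_mul_X0 ▸ h_cramer hd hf, d7_mul_X1 ▸ h_cramer hd he, d7_mul_X2 ▸ h_cramer he hf,
    mul_mem hd7 hd, mul_mem hd7 he, mul_mem hd7 hf]

theorem exists_d7_pow_mul_mem_adjoin (u : S6) : ∃ k, d7 ^ k * u ∈
    Algebra.adjoin F2 (localizedGenerators ∪ {X 3} ∪ {X 4} ∪ {X 5}) := by
  set C := Algebra.adjoin F2 (localizedGenerators ∪ {X 3} ∪ {X 4} ∪ {X 5} : Set S6)
  have hd7 : d7 ∈ C := Algebra.subset_adjoin (by simp [localizedGenerators])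
  induction u using MvPolynomial.induction_on with
  | C r => exact ⟨0, by rw [pow_zero, one_mul]; exact C.algebraMap_mem r⟩
  | add p q hp hq =>
    obtain ⟨k, hk⟩ := hp
    obtain ⟨l, hl⟩ := hq
    refine ⟨k + l, ?_⟩
    have h_split : d7 ^ (k + l) * (p + q) = d7 ^ l * (d7 ^ k * p) + d7 ^ k * (d7 ^ l * q) := by ring
    rw [h_split]
    exact C.add_mem (C.mul_mem (C.pow_mem hd7 _) hk) (C.mul_mem (C.pow_mem hd7 _) hl)
  | mul_X p i hp =>
    obtain ⟨k, hk⟩ := hp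
    refine ⟨k + 1, ?_⟩
    have h_split : d7 ^ (k + 1) * (p * X i) = d7 ^ k * p * (d7 * X i) := by ring
    rw [h_split]
    exact C.mul_mem hk (d7_mul_X_mem_adjoin i)

/-- Words that fix `d` and `e` and carry `f` to its four conjugates. -/
def wordsFixingDE : Fin 4 → List Bool :=
  ![[], [false, true, false, false],
    [false, true, false, false, true, false, true, false, false, true],
    [true, false, true, false, false, true]]

/-- Words that fix `d` and carry `e` to its six conjugates. -/
def wordsFixingD : Fin 6 → List Bool :=
  ![[], [false, false, true, false, false, true, false, true, false],
    [true, false, true, false, true, false, false, true, false, true],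
    [true, false, false, true, false, true, false, true],
    [false, false, true, false], [false, true, false, true, false]]

/-- Words that carry `d` to its seven conjugates. -/
def wordsMovingD : Fin 7 → List Bool :=
  ![[], [false, false], [true], [false], [false, true], [false, false, true], [true, false, true]]

/-- The coefficient vectors of the conjugates of `f` over `d, e`. -/
def conjugatesOfF : Fin 4 → Fin 3 → F2 := ![![0, 0, 1], ![1, 0, 1], ![0, 1, 1], ![1, 1, 1]]

/-- The coefficient vectors of the conjugates of `e` over `d`. -/
def conjugatesOfE : Fin 6 → Fin 3 → F2 :=
  ![![0, 1, 0], ![1, 1, 0], ![0, 0, 1], ![1, 0, 1], ![0, 1, 1], ![1, 1, 1]]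

/-- The coefficient vectors of the conjugates of `d`. -/
def conjugatesOfD : Fin 7 → Fin 3 → F2 :=
  ![![1, 0, 0], ![0, 1, 0], ![1, 1, 0], ![0, 0, 1], ![1, 0, 1], ![0, 1, 1], ![1, 1, 1]]

theorem substWord_wordsFixingDE (i : Fin 4) :
    substWord (wordsFixingDE i) (X 5) = linearForm (conjugatesOfF i) ∧
      substWord (wordsFixingDE i) (X 3) = X 3 ∧ substWord (wordsFixingDE i) (X 4) = X 4 := by
  fin_cases i <;>
    simp [wordsFixingDE, conjugatesOfF, substWord, linearForm, substA, substB] <;> grind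

theorem substWord_wordsFixingD (i : Fin 6) :
    substWord (wordsFixingD i) (X 4) = linearForm (conjugatesOfE i) ∧
      substWord (wordsFixingD i) (X 3) = X 3 := by
  fin_cases i <;>
    simp [wordsFixingD, conjugatesOfE, substWord, linearForm, substA, substB] <;> grind

theorem substWord_wordsMovingD (i : Fin 7) :
    substWord (wordsMovingD i) (X 3) = linearForm (conjugatesOfD i) := by
  fin_cases i <;>
    simp [wordsMovingD, conjugatesOfD, substWord, linearForm, substA, substB] <;> grind

variable {v : S6}

theorem mem_adjoin_of_mem_adjoin_X5 (hv : ∀ w, substWord w v = v)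
    (h : v ∈ Algebra.adjoin F2 (localizedGenerators ∪ {X 3} ∪ {X 4} ∪ {X 5})) :
    v ∈ Algebra.adjoin F2 (localizedGenerators ∪ {X 3} ∪ {X 4}) := by
  set C := Algebra.adjoin F2 (localizedGenerators ∪ {X 3} ∪ {X 4} : Set S6)
  have hd : (X 3 : S6) ∈ C := Algebra.subset_adjoin (by simp)
  have he : (X 4 : S6) ∈ C := Algebra.subset_adjoin (by simp)
  have hd4 : d4 ∈ C := Algebra.subset_adjoin (by simp [localizedGenerators])
  have h_quad : (X 3 ^ 2 + X 3 * X 4 + X 4 ^ 2 : S6) ∈ C :=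
    C.add_mem (C.add_mem (C.pow_mem hd _) (C.mul_mem hd he)) (C.pow_mem he _)
  refine mem_adjoin_of_forall_conjugate_fixed (φ := fun i => substWord (wordsFixingDE i))
    (c := ![d4 + (X 3 ^ 2 + X 3 * X 4 + X 4 ^ 2) ^ 2, X 3 * X 4 * (X 3 + X 4),
      X 3 ^ 2 + X 3 * X 4 + X 4 ^ 2, 0]) ?_ ?_ h ?_ ?_ fun _ => hv _
  · simp only [Fin.forall_fin_succ]
    exact ⟨C.add_mem hd4 (C.pow_mem h_quad _), C.mul_mem (C.mul_mem hd he) (C.add_mem hd he),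
      h_quad, C.zero_mem, fun i => i.elim0⟩
  · simp only [Fin.sum_univ_four, d4_eq, Matrix.cons_val, Fin.coe_ofNat_eq_mod]
    grind
  · simp only [substWord_wordsFixingDE]
    exact linearForm_injective.comp (by decide : Function.Injective conjugatesOfF)
  · rintro i t ((ht | rfl) | rfl)
    · exact substWord_localizedGenerators _ ht
    · exact (substWord_wordsFixingDE i).2.1
    · exact (substWord_wordsFixingDE i).2.2

theorem mem_adjoin_of_mem_adjoin_X4 (hv : ∀ w, substWord w v = v)
    (h : v ∈ Algebra.adjoin F2 (localizedGenerators ∪ {X 3} ∪ {X 4})) :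
    v ∈ Algebra.adjoin F2 (localizedGenerators ∪ {X 3}) := by
  set C := Algebra.adjoin F2 (localizedGenerators ∪ {X 3} : Set S6)
  have hd : (X 3 : S6) ∈ C := Algebra.subset_adjoin (by simp)
  have hd4 : d4 ∈ C := Algebra.subset_adjoin (by simp [localizedGenerators])
  have hd6 : d6 ∈ C := Algebra.subset_adjoin (by simp [localizedGenerators])
  refine mem_adjoin_of_forall_conjugate_fixed (φ := fun i => substWord (wordsFixingD i))
    (c := ![X 3 ^ 6 + d4 * X 3 ^ 2 + d6, X 3 ^ 5 + d4 * X 3, X 3 ^ 4 + d4, X 3 ^ 3, X 3 ^ 2, X 3])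
    ?_ ?_ h ?_ ?_ fun _ => hv _
  · simp only [Fin.forall_fin_succ]
    exact ⟨C.add_mem (C.add_mem (C.pow_mem hd _) (C.mul_mem hd4 (C.pow_mem hd _))) hd6,
      C.add_mem (C.pow_mem hd _) (C.mul_mem hd4 hd), C.add_mem (C.pow_mem hd _) hd4,
      C.pow_mem hd _, C.pow_mem hd _, hd, fun i => i.elim0⟩
  · simp only [Fin.sum_univ_six, d4_eq, d6_eq, Matrix.cons_val, Fin.coe_ofNat_eq_mod]
    grind
  · simp only [substWord_wordsFixingD]
    exact linearForm_injective.comp (by decide : Function.Injective conjugatesOfE)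
  · rintro i t (ht | rfl)
    · exact substWord_localizedGenerators _ ht
    · exact (substWord_wordsFixingD i).2

theorem mem_adjoin_of_mem_adjoin_X3 (hv : ∀ w, substWord w v = v)
    (h : v ∈ Algebra.adjoin F2 (localizedGenerators ∪ {X 3})) :
    v ∈ Algebra.adjoin F2 localizedGenerators := by
  set C := Algebra.adjoin F2 localizedGenerators
  have hd4 : d4 ∈ C := Algebra.subset_adjoin (by simp [localizedGenerators])
  have hd6 : d6 ∈ C := Algebra.subset_adjoin (by simp [localizedGenerators])
  have hd7 : d7 ∈ C := Algebra.subset_adjoin (by simp [localizedGenerators])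
  refine mem_adjoin_of_forall_conjugate_fixed (φ := fun i => substWord (wordsMovingD i))
    (c := ![d7, d6, 0, d4, 0, 0, 0]) ?_ ?_ h ?_ (fun _ _ => substWord_localizedGenerators _)
    fun _ => hv _
  · simp only [Fin.forall_fin_succ]
    exact ⟨hd7, hd6, C.zero_mem, hd4, C.zero_mem, C.zero_mem, C.zero_mem, fun i => i.elim0⟩
  · simp only [Fin.sum_univ_seven, d4_eq, d6_eq, d7_eq, Matrix.cons_val, Fin.coe_ofNat_eq_mod]
    grind
  · simp only [substWord_wordsMovingD]
    exact linearForm_injective.comp (by decide : Function.Injective conjugatesOfD)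

theorem exists_d7_pow_mul_mem_adjoin_localizedGenerators {u : S6} (hA : substA u = u)
    (hB : substB u = u) : ∃ k, d7 ^ k * u ∈ Algebra.adjoin F2 localizedGenerators := by
  obtain ⟨k, hk⟩ := exists_d7_pow_mul_mem_adjoin u
  have h_fixed (w) : substWord w (d7 ^ k * u) = d7 ^ k * u := by
    rw [map_mul, map_pow, substWord_localizedGenerators w (by simp [localizedGenerators]),
      substWord_eq_self hA hB]
  exact ⟨k, mem_adjoin_of_mem_adjoin_X3 h_fixed (mem_adjoin_of_mem_adjoin_X4 h_fixed
    (mem_adjoin_of_mem_adjoin_X5 h_fixed hk))⟩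

end Localization

/-! ### Rewriting power products -/

section Rewriting

theorem powerProduct_add {ι S : Type*} [Fintype ι] [CommSemiring S] (v : ι → S) (l m : ι → ℕ) :
    powerProduct v (l + m) = powerProduct v l * powerProduct v m := by
  simp only [powerProduct, Pi.add_apply, pow_add, Finset.prod_mul_distrib]

theorem powerProduct_mem_adjoin {ι k S : Type*} [Fintype ι] [CommSemiring k] [CommSemiring S]
    [Algebra k S] (v : ι → S) (m : ι → ℕ) : powerProduct v m ∈ Algebra.adjoin k (Set.range v) :=
  Subalgebra.prod_mem _ fun i _ =>
    Subalgebra.pow_mem _ (Algebra.subset_adjoin (Set.mem_range_self i)) _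

theorem mem_of_mem_adjoin_range {ι k S : Type*} [Fintype ι] [CommSemiring k] [CommSemiring S]
    [Algebra k S] {v : ι → S} {V : Submodule k S} (hV : ∀ m, powerProduct v m ∈ V) {a : S}
    (ha : a ∈ Algebra.adjoin k (Set.range v)) : a ∈ V := by
  rw [Algebra.adjoin_range_eq_range_aeval] at ha
  obtain ⟨p, rfl : aeval v p = a⟩ := ha
  rw [p.as_sum, map_sum]
  refine V.sum_mem fun s _ => ?_
  rw [aeval_monomial, ← Algebra.smul_def, Finsupp.prod_fintype _ _ fun _ => pow_zero _]
  exact V.smul_mem _ (hV s)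

theorem pi_single_le_of_le {ι : Type*} [DecidableEq ι] {m : ι → ℕ} {i : ι} {b : ℕ} (h : b ≤ m i) :
    Pi.single i b ≤ m :=
  update_le_iff.mpr ⟨h, fun _ _ => Nat.zero_le _⟩

variable {n : ℕ} {S : Type*} [CommSemiring S] {v : Fin n → S} {rels : List (ℕ × List ℕ)}
  {w : Fin n → ℕ}

/-- Applying a relation lowers the weight of each of the resulting power products, unless it lands
in `V` right away. -/
theorem powerProduct_mem_of_satisfiesRelations (hv : SatisfiesRelations v rels) (V : AddSubmonoid S)
    (h_step : ∀ r ∈ rels, ∀ t ∈ r.2,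
      weightedDegree w (decimalExponents t) < weightedDegree w (decimalExponents r.1) ∨
        ∀ m, powerProduct v (m + decimalExponents t) ∈ V)
    (h_irred : ∀ m, (∀ r ∈ rels, ¬ decimalExponents r.1 ≤ m) → powerProduct v m ∈ V)
    (m : Fin n → ℕ) : powerProduct v m ∈ V := by
  have h_weight (l m : Fin n → ℕ) :
      weightedDegree w (l + m) = weightedDegree w l + weightedDegree w m := by
    simp only [weightedDegree, Pi.add_apply, mul_add, Finset.sum_add_distrib]
  induction hd : weightedDegree w m using Nat.strong_induction_on generalizing m with
  | _ d ih =>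
    by_cases h : ∀ r ∈ rels, ¬ decimalExponents r.1 ≤ m
    · exact h_irred m h
    push Not at h
    obtain ⟨r, hr, hrm⟩ := h
    obtain ⟨l, rfl⟩ := exists_add_of_le hrm
    rw [powerProduct_add, hv r hr, evalCodes, mul_comm, ← List.sum_map_mul_left]
    refine list_sum_mem fun x hx => ?_
    obtain ⟨t, ht, rfl⟩ := List.mem_map.mp hx
    rw [← powerProduct_add]
    rcases h_step r hr t ht with h_lt | h_mem
    · refine ih _ ?_ (l + decimalExponents t) rfl
      rw [← hd, h_weight, h_weight]
      omega
    · exact h_mem l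

theorem powerProduct_mem_span_of_satisfiesRelations {k : Type*} [CommSemiring k] [Algebra k S]
    (hv : SatisfiesRelations v rels)
    (h_weight : ∀ r ∈ rels, ∀ t ∈ r.2,
      weightedDegree w (decimalExponents t) < weightedDegree w (decimalExponents r.1))
    {P : Set (Fin n)} {b : ℕ}
    (hP : ∀ i ∉ P, ∃ r ∈ rels, decimalExponents r.1 ≤ Pi.single i (b + 1)) (m : Fin n → ℕ) :
    powerProduct v m ∈ Submodule.span (Algebra.adjoin k (v '' P))
      (powerProduct v '' Set.Iic fun _ => b) := by
  classical
  refine powerProduct_mem_of_satisfiesRelations hv (Submodule.toAddSubmonoid _)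
    (fun r hr t ht => .inl (h_weight r hr t ht)) (fun m hm => ?_) m
  have h_coeff : powerProduct v (P.indicator m) ∈ Algebra.adjoin k (v '' P) := by
    refine Subalgebra.prod_mem _ fun i _ => ?_
    by_cases hi : i ∈ P
    · exact Subalgebra.pow_mem _ (Algebra.subset_adjoin (Set.mem_image_of_mem v hi)) _
    · rw [Set.indicator_of_notMem hi, pow_zero]
      exact one_mem _
  have h_box : Pᶜ.indicator m ∈ Set.Iic fun _ => b := by
    refine Set.indicator_le' (fun i hi => ?_) fun _ _ => Nat.zero_le b
    by_contra! h_lt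
    obtain ⟨r, hr, hri⟩ := hP i hi
    exact hm r hr (hri.trans (pi_single_le_of_le h_lt))
  rw [← P.indicator_self_add_compl m, powerProduct_add]
  exact Submodule.smul_mem _ (⟨_, h_coeff⟩ : Algebra.adjoin k (v '' P))
    (Submodule.subset_span ⟨_, h_box, rfl⟩)

end Rewriting

section Spanning

/-- The exponent vectors not involving `d₇` that no relation modulo `d₇` applies to. -/
def standardExponents : Set (Fin 11 → ℕ) :=
  {m | m 10 = 0 ∧ ∀ r ∈ relationsModD7, ¬ decimalExponents r.1 ≤ m}

/-- Weights that strictly decrease when a relation modulo `d₇` is applied, up to multiples of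
`d₇`. -/
def weightModD7 : Fin 11 → ℕ := ![1, 8, 3, 9, 21, 30, 6, 12, 20, 14, 21]

/-- Weights that strictly decrease when a relation over the parameters is applied. -/
def weightOverParameters : Fin 11 → ℕ := ![0, 5, 5, 8, 29, 35, 25, 29, 30, 31, 44]

theorem relationsModD7_weight_lt : ∀ r ∈ relationsModD7, ∀ t ∈ r.2,
    weightedDegree weightModD7 (decimalExponents t) <
      weightedDegree weightModD7 (decimalExponents r.1) ∨
    1 ≤ decimalExponents t (10 : Fin 11) := by
  decide +kernel

theorem relationsOverParameters_weight_lt : ∀ r ∈ relationsOverParameters, ∀ t ∈ r.2,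
    weightedDegree weightOverParameters (decimalExponents t) <
      weightedDegree weightOverParameters (decimalExponents r.1) := by
  decide +kernel

variable {S : Type*} [CommSemiring S] [Algebra F2 S] {v : Fin 11 → S}

theorem exists_standard_add_mul_of_satisfiesRelations (hv : SatisfiesRelations v relationsModD7)
    {a : S} (ha : a ∈ Algebra.adjoin F2 (Set.range v)) :
    ∃ l ∈ Finsupp.supported F2 F2 standardExponents, ∃ a' ∈ Algebra.adjoin F2 (Set.range v),
      a = Finsupp.linearCombination F2 (powerProduct v) l + v 10 * a' := by
  set A := Algebra.adjoin F2 (Set.range v)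
  set V := Submodule.span F2 (powerProduct v '' standardExponents) ⊔
    A.toSubmodule.map (LinearMap.mulLeft F2 (v 10))
  have h_mul {m : Fin 11 → ℕ} (hm : 1 ≤ m 10) : powerProduct v m ∈ V := by
    refine Submodule.mem_sup_right
      ⟨powerProduct v (m - Pi.single 10 1), powerProduct_mem_adjoin v _, ?_⟩
    have h_single : v 10 = powerProduct v (Pi.single 10 1) := by
      simp [powerProduct, Pi.single_apply, pow_ite]
    rw [LinearMap.mulLeft_apply]
    nth_rw 1 [h_single]
    rw [← powerProduct_add, add_tsub_cancel_of_le (pi_single_le_of_le hm)]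
  have h_mem (m) : powerProduct v m ∈ V := by
    refine powerProduct_mem_of_satisfiesRelations hv V.toAddSubmonoid
      (fun r hr t ht => (relationsModD7_weight_lt r hr t ht).imp_right
        fun h m => h_mul (Nat.le_add_left_of_le h)) (fun m hm => ?_) m
    by_cases h : m 10 = 0
    · exact Submodule.mem_sup_left (Submodule.subset_span ⟨m, ⟨h, hm⟩, rfl⟩)
    · exact h_mul (Nat.one_le_iff_ne_zero.mpr h)
  obtain ⟨y, hy, z, hz, rfl⟩ := Submodule.mem_sup.mp (mem_of_mem_adjoin_range h_mem ha)
  obtain ⟨l, hl, rfl⟩ := (Finsupp.mem_span_image_iff_linearCombination F2).mp hy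
  obtain ⟨a', ha', rfl⟩ := hz
  exact ⟨l, hl, a', ha', rfl⟩

theorem finite_over_parameters_of_satisfiesRelations
    (hv : SatisfiesRelations v relationsOverParameters)
    (h_gen : Algebra.adjoin F2 (Set.range v) = ⊤) :
    Module.Finite
      (Algebra.adjoin F2 (Set.range fun i : Fin 6 => v (i.castLE (by decide)))) S := by
  have h_power : ∀ i ∉ Set.range (Fin.castLE (by decide : 6 ≤ 11)),
      ∃ r ∈ relationsOverParameters, decimalExponents r.1 ≤ Pi.single i (2 + 1) := by
    simp only [Set.mem_range, Pi.le_def, Pi.single_apply]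
    decide +kernel
  refine ⟨⟨((Set.finite_Iic fun _ => 2).image (powerProduct v)).toFinset, ?_⟩⟩
  rw [Set.Finite.coe_toFinset, eq_top_iff, ← Function.comp_def v, Set.range_comp]
  exact fun a _ => mem_of_mem_adjoin_range (V := (Submodule.span _ _).restrictScalars F2)
    (powerProduct_mem_span_of_satisfiesRelations hv relationsOverParameters_weight_lt h_power)
    (h_gen ▸ Algebra.mem_top)

end Spanning

/-! ### Independence by leading terms -/

section Triangular

/-- In a linear relation, the map `T a` for the smallest index `a` that occurs kills all terms of
larger index. -/
theorem linearIndepOn_of_triangular {ι α k M M' : Type*} [LinearOrder α] [Ring k]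
    [AddCommGroup M] [Module k M] [AddCommGroup M'] [Module k M'] {P : ι → M} {S : Set ι}
    (d : ι → α) (T : α → M →ₗ[k] M')
    (hT : ∀ m ∈ S, ∀ m' ∈ S, d m' < d m → T (d m') (P m) = 0)
    (h_fibre : ∀ a, LinearIndepOn k (fun m => T a (P m)) {m ∈ S | d m = a}) :
    LinearIndepOn k P S := by
  refine linearIndepOn_iff.mpr fun l hl hlP => ?_
  by_contra h_ne
  obtain ⟨m₀, hm₀, h_min⟩ :=
    l.support.exists_min_image d (Finsupp.support_nonempty_iff.mpr h_ne)
  have h_top : Finsupp.linearCombination k (fun m => T (d m₀) (P m))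
      (l.filter fun m => d m = d m₀) = 0 := by
    rw [← map_zero (T (d m₀)), ← hlP, Finsupp.linearCombination_apply,
      Finsupp.linearCombination_apply, map_finsuppSum, Finsupp.sum, Finsupp.sum,
      Finsupp.support_filter, Finset.sum_filter]
    refine Finset.sum_congr rfl fun m hm => ?_
    split_ifs with hd
    · rw [Finsupp.filter_apply_pos (fun m => d m = d m₀) l hd, map_smul]
    · rw [map_smul, hT m (hl hm) m₀ (hl hm₀) (lt_of_le_of_ne' (h_min m hm) hd), smul_zero]
  have h_filter : (l.filter fun m => d m = d m₀) = 0 := by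
    refine linearIndepOn_iff.mp (h_fibre (d m₀)) _ (fun m hm => ?_) h_top
    rw [Finset.mem_coe, Finsupp.support_filter, Finset.mem_filter] at hm
    exact ⟨hl hm.1, hm.2⟩
  refine Finsupp.mem_support_iff.mp hm₀ ?_
  rw [← Finsupp.filter_apply_pos (fun m => d m = d m₀) l rfl, h_filter, Finsupp.coe_zero,
    Pi.zero_apply]

theorem linearIndepOn_of_subsingleton {ι k M : Type*} [DivisionRing k] [AddCommGroup M]
    [Module k M] {P : ι → M} {S : Set ι} (hS : S.Subsingleton) (hP : ∀ m ∈ S, P m ≠ 0) :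
    LinearIndepOn k P S := by
  rcases hS.eq_empty_or_singleton with rfl | ⟨m, rfl⟩
  · exact linearIndepOn_empty k P
  · exact LinearIndepOn.singleton (hP m rfl)

theorem linearIndepOn_of_linearIndepOn_coeff {ι k B : Type*} [CommRing k] [CommRing B]
    [Algebra k B] {P : ι → Polynomial B} {S : Set ι} (d : ι → ℕ)
    (hd : ∀ m ∈ S, (P m).natDegree ≤ d m)
    (h_coeff : ∀ N, LinearIndepOn k (fun m => (P m).coeff N) {m ∈ S | d m = N}) :
    LinearIndepOn k P S :=
  linearIndepOn_of_triangular (OrderDual.toDual ∘ d)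
    (fun N => (Polynomial.lcoeff B (OrderDual.ofDual N)).restrictScalars k)
    (fun m hm _ _ h => Polynomial.coeff_eq_zero_of_natDegree_lt ((hd m hm).trans_lt h)) h_coeff

theorem linearIndepOn_C_mul_X_pow {ι k B : Type*} [CommRing k] [CommRing B] [Algebra k B]
    {c : ι → B} {S : Set ι} (d : ι → ℕ) (hc : ∀ N, LinearIndepOn k c {m ∈ S | d m = N}) :
    LinearIndepOn k (fun m => Polynomial.C (c m) * Polynomial.X ^ d m) S := by
  refine linearIndepOn_of_linearIndepOn_coeff d
    (fun m _ => Polynomial.natDegree_C_mul_X_pow_le _ _) fun N => (hc N).congr ?_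
  rintro m ⟨-, rfl⟩
  simp

/-- Polynomials are separated by reducing them modulo powers of `X - C a`. -/
theorem linearIndepOn_union_of_rootMultiplicity {ι k : Type*} [Field k] {P : ι → Polynomial k}
    {S T : Set ι} (a : k) (hP : ∀ m ∈ S ∪ T, P m ≠ 0)
    (hS : Set.InjOn (fun m => (P m).rootMultiplicity a) S) (hT : LinearIndepOn k P T)
    (hST : ∀ m ∈ S, ∀ m' ∈ T, (P m).rootMultiplicity a < (P m').rootMultiplicity a) :
    LinearIndepOn k P (S ∪ T) := by
  classical
  let reduce : ℕ∞ → Polynomial k →ₗ[k] Polynomial k := ENat.recTopCoe LinearMap.id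
    fun n => Polynomial.modByMonicHom ((Polynomial.X - Polynomial.C a) ^ (n + 1))
  have reduce_eq_zero {m} (hm : m ∈ S ∪ T) (n : ℕ) :
      reduce n (P m) = 0 ↔ n < (P m).rootMultiplicity a := by
    rw [← Nat.succ_le_iff, Polynomial.le_rootMultiplicity_iff (hP m hm)]
    exact Polynomial.modByMonic_eq_zero_iff_dvd ((Polynomial.monic_X_sub_C a).pow _)
  let d (m : ι) : ℕ∞ := if m ∈ S then (P m).rootMultiplicity a else ⊤
  have hd {m} (hm : m ∈ S) : d m = (P m).rootMultiplicity a := if_pos hm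
  have mem_of_ne_top {m} (hm : d m ≠ ⊤) : m ∈ S := by
    by_contra h
    exact hm (if_neg h)
  refine linearIndepOn_of_triangular d reduce (fun m hm m' _ h_lt => ?_) fun N => ?_
  · have hm'S : m' ∈ S := mem_of_ne_top h_lt.ne_top
    rw [hd hm'S, reduce_eq_zero hm]
    by_cases hmS : m ∈ S
    · rwa [hd hmS, hd hm'S, Nat.cast_lt] at h_lt
    · exact hST m' hm'S m (hm.resolve_left hmS)
  · induction N using ENat.recTopCoe with
    | top =>
      exact hT.mono fun m hm => hm.1.resolve_left fun hmS =>
        ENat.natCast_ne_top _ ((hd hmS).symm.trans hm.2)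
    | coe n =>
      have h_mult {m} (hdm : d m = n) : m ∈ S ∧ (P m).rootMultiplicity a = n := by
        have hmS : m ∈ S := mem_of_ne_top (hdm ▸ ENat.natCast_ne_top n)
        exact ⟨hmS, by rwa [hd hmS, Nat.cast_inj] at hdm⟩
      refine linearIndepOn_of_subsingleton (fun m hm m' hm' => ?_) fun m hm => ?_
      · exact hS (h_mult hm.2).1 (h_mult hm'.2).1 ((h_mult hm.2).2.trans (h_mult hm'.2).2.symm)
      · rw [Ne, reduce_eq_zero hm.1, (h_mult hm.2).2]
        exact lt_irrefl n

end Triangular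

section TopCoefficient

/-- The polynomial `P` has degree at most `d` and `c` is its coefficient in degree `d`. -/
def HasTopCoeff {B : Type*} [CommRing B] (P : Polynomial B) (d : ℕ) (c : B) : Prop :=
  P.natDegree ≤ d ∧ P.coeff d = c

namespace HasTopCoeff

variable {B : Type*} [CommRing B] {P Q : Polynomial B} {d e : ℕ} {c c' : B}

theorem C (c : B) : HasTopCoeff (Polynomial.C c) 0 c :=
  ⟨(Polynomial.natDegree_C c).le, Polynomial.coeff_C_zero⟩

theorem X : HasTopCoeff (Polynomial.X : Polynomial B) 1 1 :=
  ⟨Polynomial.natDegree_X_le, Polynomial.coeff_X_one⟩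

theorem zero (d : ℕ) : HasTopCoeff (0 : Polynomial B) d 0 :=
  ⟨Nat.zero_le d, Polynomial.coeff_zero d⟩

theorem one : HasTopCoeff (1 : Polynomial B) 0 1 :=
  ⟨Polynomial.natDegree_one.le, Polynomial.coeff_one_zero⟩

theorem of_lt (hP : HasTopCoeff P d c) (h : d < e) : HasTopCoeff P e 0 :=
  ⟨hP.1.trans h.le, Polynomial.coeff_eq_zero_of_natDegree_lt (hP.1.trans_lt h)⟩

theorem add (hP : HasTopCoeff P d c) (hQ : HasTopCoeff Q d c') : HasTopCoeff (P + Q) d (c + c') :=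
  ⟨Polynomial.natDegree_add_le_of_degree_le hP.1 hQ.1, by rw [Polynomial.coeff_add, hP.2, hQ.2]⟩

theorem mul (hP : HasTopCoeff P d c) (hQ : HasTopCoeff Q e c') :
    HasTopCoeff (P * Q) (d + e) (c * c') :=
  ⟨Polynomial.natDegree_mul_le_of_le hP.1 hQ.1, by
    rw [Polynomial.coeff_mul_add_eq_of_natDegree_le hP.1 hQ.1, hP.2, hQ.2]⟩

theorem pow (hP : HasTopCoeff P d c) (n : ℕ) : HasTopCoeff (P ^ n) (d * n) (c ^ n) := by
  induction n with
  | zero => simpa using one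
  | succ n ih =>
    rw [pow_succ, pow_succ, Nat.mul_succ]
    exact ih.mul hP

theorem X_pow (n : ℕ) : HasTopCoeff (Polynomial.X ^ n : Polynomial B) n 1 := by
  simpa only [one_mul, one_pow] using (X (B := B)).pow n

theorem add_of_lt (hP : HasTopCoeff P d c) (hQ : HasTopCoeff Q e c') (h : e < d) :
    HasTopCoeff (P + Q) d c := by
  simpa only [add_zero] using hP.add (hQ.of_lt h)

theorem prod {ι : Type*} (s : Finset ι) {P : ι → Polynomial B} {d : ι → ℕ} {c : ι → B}
    (hP : ∀ i ∈ s, HasTopCoeff (P i) (d i) (c i)) :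
    HasTopCoeff (∏ i ∈ s, P i) (∑ i ∈ s, d i) (∏ i ∈ s, c i) := by
  induction s using Finset.cons_induction with
  | empty => exact one
  | cons i s hi ih =>
    rw [Finset.prod_cons, Finset.sum_cons, Finset.prod_cons]
    rw [Finset.forall_mem_cons] at hP
    exact hP.1.mul (ih hP.2)

theorem exists_eval_eq {K : Type*} [Field K] [IsAlgClosed K] {Q : Polynomial K}
    (hQ : HasTopCoeff Q d 1) (hd : d ≠ 0) (y : K) : ∃ x, Q.eval x = y := by
  have h_deg : Q.natDegree = d :=
    Polynomial.natDegree_eq_of_le_of_coeff_ne_zero hQ.1 (hQ.2 ▸ one_ne_zero)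
  exact IsAlgClosed.eval_surjective (h_deg.symm ▸ hd) y

end HasTopCoeff

variable {B : Type*} [CommRing B] {n d : ℕ} {v : Fin n → Polynomial B} {w : Fin n → ℕ}
  {u : Fin n → B}

theorem hasTopCoeff_powerProduct (hv : ∀ i, HasTopCoeff (v i) (w i) (u i)) (m : Fin n → ℕ) :
    HasTopCoeff (powerProduct v m) (weightedDegree w m) (powerProduct u m) :=
  .prod _ fun i _ => (hv i).pow (m i)

theorem hasTopCoeff_evalCodes (hv : ∀ i, HasTopCoeff (v i) (w i) (u i)) {l : List ℕ}
    (hl : ∀ k ∈ l, weightedDegree w (decimalExponents k) ≤ d) :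
    HasTopCoeff (evalCodes v l) d
      (evalCodes u (l.filter fun k => weightedDegree w (decimalExponents k) = d)) := by
  induction l with
  | nil => exact .zero d
  | cons k l ih =>
    rw [List.forall_mem_cons] at hl
    have hk := hasTopCoeff_powerProduct hv (decimalExponents k)
    rw [evalCodes_cons, List.filter_cons]
    split_ifs with h
    · exact (of_decide_eq_true h ▸ hk).add (ih hl.2)
    · simpa only [zero_add] using
        (hk.of_lt (lt_of_le_of_ne hl.1 fun h' => h (decide_eq_true h'))).add (ih hl.2)

end TopCoefficient

/-! ### Standard power products modulo `d₇` -/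

section StandardExponents

/-- The degrees in the variable `s` of the values of the generators at `genericValues`. -/
def topDegree : Fin 11 → ℕ := ![0, 1, 2, 0, 6, 7, 0, 1, 4, 0, 0]

/-- The standard exponent vectors of degree `n` whose power products have, at `genericValues`, top
coefficients of degree `j` in `y` and `i` in `p`, in degree `t` in `s`. -/
def standardExponentsOfType (n t i j : ℕ) : Set (Fin 11 → ℕ) :=
  {m ∈ standardExponents | weightedDegree generatorDegree m = n ∧ weightedDegree topDegree m = t ∧
    m 0 = i ∧ m 3 = j}

theorem weightedDegree_generatorDegree (m : Fin 11 → ℕ) :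
    weightedDegree generatorDegree m = 2 * m 0 + 3 * m 1 + 3 * m 2 + 4 * m 3 + 6 * m 4 + 7 * m 5 +
      4 * m 6 + 5 * m 7 + 5 * m 8 + 6 * m 9 + 7 * m 10 := by
  simp only [weightedDegree, generatorDegree, Fin.sum_univ_succ, Matrix.cons_val_zero,
    Matrix.cons_val_succ, Fin.succ_zero_eq_one, Fin.succ_one_eq_two, Fin.reduceSucc,
    Finset.univ_unique, Fin.default_eq_zero, Matrix.cons_val_fin_one, Finset.sum_singleton]
  ring

theorem weightedDegree_topDegree (m : Fin 11 → ℕ) :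
    weightedDegree topDegree m = m 1 + 2 * m 2 + 6 * m 4 + 7 * m 5 + m 7 + 4 * m 8 := by
  simp only [weightedDegree, topDegree, Fin.sum_univ_succ, Matrix.cons_val_zero,
    Matrix.cons_val_succ, Fin.succ_zero_eq_one, Fin.succ_one_eq_two, Fin.reduceSucc,
    Finset.univ_unique, Fin.default_eq_zero, Matrix.cons_val_fin_one, Finset.sum_singleton]
  ring

theorem bounds_of_mem_standardExponents {m : Fin 11 → ℕ} (hm : m ∈ standardExponents) :
    m 10 = 0 ∧ m 1 ≤ 3 ∧ m 7 ≤ 1 ∧ m 8 ≤ 1 ∧ (m 5 = 0 ∨ m 6 = 0 ∧ m 7 = 0 ∧ m 9 = 0) ∧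
      (m 8 = 0 ∨ m 9 = 0 ∧ m 1 ≤ 2 ∧ (m 1 = 0 ∨ m 7 = 0)) ∧ (m 4 = 0 ∨ m 9 = 0) := by
  obtain ⟨h10, h⟩ := hm
  simp only [relationsModD7, List.forall_mem_cons, Pi.le_def, Fin.forall_fin_succ,
    decimalExponents, Fin.val_succ, Fin.val_zero] at h
  simp only [pow_zero, Nat.div_one, Nat.reduceMod, zero_le, zero_add, pow_one, Nat.reduceDiv,
    Fin.succ_zero_eq_one, Nat.reduceAdd, Nat.reducePow, Nat.zero_mod, Fin.succ_one_eq_two,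
    Fin.reduceSucc, IsEmpty.forall_iff, and_true, true_and, Nat.one_mod, Nat.mod_self] at h
  omega

variable {n t i j : ℕ} {m m' : Fin 11 → ℕ}

/-- The exponent `m 2` is eliminated from the two degrees `n` and `t`. -/
theorem relation_of_mem_standardExponentsOfType (hm : m ∈ standardExponentsOfType n t i j)
    (hm' : m' ∈ standardExponentsOfType n t i j) :
    3 * m 1 + 8 * m 6 + 7 * m 7 + 12 * m 9 + (6 * m' 4 + 7 * m' 5 + 2 * m' 8) =
      3 * m' 1 + 8 * m' 6 + 7 * m' 7 + 12 * m' 9 + (6 * m 4 + 7 * m 5 + 2 * m 8) := by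
  obtain ⟨⟨h10, -⟩, hn, ht, hi, hj⟩ := hm
  obtain ⟨⟨h10', -⟩, hn', ht', hi', hj'⟩ := hm'
  rw [weightedDegree_generatorDegree] at hn hn'
  rw [weightedDegree_topDegree] at ht ht'
  omega

theorem eq_of_mem_standardExponentsOfType (hm : m ∈ standardExponentsOfType n t i j)
    (hm' : m' ∈ standardExponentsOfType n t i j)
    (h : ∀ i ∈ ({1, 4, 5, 6, 7, 8, 9} : Finset (Fin 11)), m i = m' i) : m = m' := by
  obtain ⟨⟨h10, -⟩, -, ht, hi, hj⟩ := hm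
  obtain ⟨⟨h10', -⟩, -, ht', hi', hj'⟩ := hm'
  rw [weightedDegree_topDegree] at ht ht'
  simp only [Finset.mem_insert, Finset.mem_singleton, forall_eq_or_imp, forall_eq] at h
  simp only [funext_iff, Fin.forall_fin_succ, Fin.succ_zero_eq_one, Fin.succ_one_eq_two,
    Fin.reduceSucc, IsEmpty.forall_iff, and_true]
  omega

theorem injOn_three_mul_add_five_mul_mod_seven :
    Set.InjOn (fun x : ℕ × ℕ => (3 * x.1 + 5 * x.2) % 7)
      {x | x.1 ≤ 3 ∧ x.2 ≤ 1 ∧ (x.2 = 0 ∨ x.1 ≤ 2)} := by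
  rintro ⟨a, b⟩ ⟨ha, hb, hab⟩ ⟨a', b'⟩ ⟨ha', hb', hab'⟩ h
  simp only [Prod.mk.injEq] at *
  interval_cases b <;> interval_cases b' <;> interval_cases a <;> interval_cases a' <;> omega

theorem eq_of_mem_standardExponentsOfType_of_ne_zero (hm : m ∈ standardExponentsOfType n t i j)
    (hm' : m' ∈ standardExponentsOfType n t i j) (h5 : m 5 ≠ 0) (h5' : m' 5 ≠ 0)
    (h4 : m 4 = m' 4) : m = m' := by
  have h_rel := relation_of_mem_standardExponentsOfType hm hm'
  obtain ⟨-, h1, -, h8, h5_or, h81, -⟩ := bounds_of_mem_standardExponents hm.1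
  obtain ⟨-, h1', -, h8', h5_or', h81', -⟩ := bounds_of_mem_standardExponents hm'.1
  obtain ⟨h6, h7, h9⟩ := h5_or.resolve_left h5
  obtain ⟨h6', h7', h9'⟩ := h5_or'.resolve_left h5'
  rw [h4, h6, h6', h7, h7', h9, h9'] at h_rel
  have h18 : (m 1, m 8) = (m' 1, m' 8) :=
    injOn_three_mul_add_five_mul_mod_seven ⟨h1, h8, h81.imp_right fun h => h.2.1⟩
      ⟨h1', h8', h81'.imp_right fun h => h.2.1⟩ (by dsimp only; omega)
  obtain ⟨h1_eq, h8_eq⟩ := Prod.mk.inj h18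
  rw [h1_eq, h8_eq] at h_rel
  refine eq_of_mem_standardExponentsOfType hm hm' ?_
  simp only [Finset.mem_insert, Finset.mem_singleton, forall_eq_or_imp, forall_eq]
  exact ⟨h1_eq, h4, by omega, h6.trans h6'.symm, h7.trans h7'.symm, h8_eq, h9.trans h9'.symm⟩

theorem lt_of_mem_standardExponentsOfType (hm : m ∈ standardExponentsOfType n t i j)
    (hm' : m' ∈ standardExponentsOfType n t i j) (h5 : m 5 ≠ 0) (h5' : m' 5 = 0) :
    m 4 < m' 4 := by
  have h_rel := relation_of_mem_standardExponentsOfType hm hm'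
  obtain ⟨-, h1, -, h8, h5_or, h81, -⟩ := bounds_of_mem_standardExponents hm.1
  have h8_le' : m' 8 ≤ 1 := (bounds_of_mem_standardExponents hm'.1).2.2.2.1
  obtain ⟨h6, h7, h9⟩ := h5_or.resolve_left h5
  by_contra! h4
  have h5_one : m 5 = 1 := by omega
  have h679 : m' 6 = 0 ∧ m' 7 = 0 ∧ m' 9 = 0 := by omega
  rcases Nat.le_one_iff_eq_zero_or_eq_one.mp h8 with h8 | h8 <;> omega

theorem eq_of_mem_standardExponentsOfType_of_eq_zero (hm : m ∈ standardExponentsOfType n t i j)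
    (hm' : m' ∈ standardExponentsOfType n t i j) (h5 : m 5 = 0) (h5' : m' 5 = 0)
    (h : 2 * m 6 + m 7 + m 8 + 3 * m 4 = 2 * m' 6 + m' 7 + m' 8 + 3 * m' 4) : m = m' := by
  have h_rel := relation_of_mem_standardExponentsOfType hm hm'
  obtain ⟨-, h1, h7, h8, -, h81, h49⟩ := bounds_of_mem_standardExponents hm.1
  obtain ⟨-, h1', h7', h8', -, h81', h49'⟩ := bounds_of_mem_standardExponents hm'.1
  have h_elim : m 1 + m 7 + 4 * m 9 + (6 * m' 4 + 2 * m' 8) =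
      m' 1 + m' 7 + 4 * m' 9 + (6 * m 4 + 2 * m 8) := by omega
  clear h_rel
  refine eq_of_mem_standardExponentsOfType hm hm' ?_
  simp only [Finset.mem_insert, Finset.mem_singleton, forall_eq_or_imp, forall_eq]
  rcases Nat.le_one_iff_eq_zero_or_eq_one.mp h7 with h7 | h7 <;>
    rcases Nat.le_one_iff_eq_zero_or_eq_one.mp h7' with h7' | h7' <;>
    rcases Nat.le_one_iff_eq_zero_or_eq_one.mp h8 with h8 | h8 <;>
    rcases Nat.le_one_iff_eq_zero_or_eq_one.mp h8' with h8' | h8' <;>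
    rcases h49 with h4 | h9 <;> rcases h49' with h4' | h9' <;> omega

end StandardExponents

/-! ### Independence of the standard power products at a generic point -/

section TopFactor

/-- The part in `x` of the top coefficient of the power product with exponents `m` at
`genericValues`. -/
noncomputable def topFactor (m : Fin 11 → ℕ) : Polynomial F2 :=
  Polynomial.X ^ (2 * m 6 + m 7 + m 8 + 2 * m 5) * (Polynomial.X ^ 3 + 1) ^ m 4

theorem hasTopCoeff_topFactor (m : Fin 11 → ℕ) :
    HasTopCoeff (topFactor m) (2 * m 6 + m 7 + m 8 + 2 * m 5 + 3 * m 4) 1 := by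
  have h_cube : HasTopCoeff (Polynomial.X ^ 3 + 1 : Polynomial F2) 3 1 := by
    exact (HasTopCoeff.X_pow 3).add_of_lt .one (by norm_num)
  simpa only [one_pow, mul_one, topFactor] using (HasTopCoeff.X_pow _).mul (h_cube.pow (m 4))

theorem topFactor_ne_zero (m : Fin 11 → ℕ) : topFactor m ≠ 0 := by
  intro h
  have := (hasTopCoeff_topFactor m).2
  simp [h] at this

theorem rootMultiplicity_one_topFactor (m : Fin 11 → ℕ) :
    (topFactor m).rootMultiplicity 1 = m 4 := by
  set Q : Polynomial F2 := Polynomial.X ^ (2 * m 6 + m 7 + m 8 + 2 * m 5) *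
    (Polynomial.X ^ 2 + Polynomial.X + 1) ^ m 4 with hQ
  have h_cube : (Polynomial.X ^ 3 + 1 : Polynomial F2) =
      (Polynomial.X ^ 2 + Polynomial.X + 1) * (Polynomial.X - Polynomial.C 1) := by
    rw [map_one]
    linear_combination (CharTwo.two_eq_zero : (2 : Polynomial F2) = 0)
  have h_factor : topFactor m = Q * (Polynomial.X - Polynomial.C 1) ^ m 4 := by
    rw [topFactor, h_cube, mul_pow, hQ, mul_assoc]
  have h_eval : Q.eval 1 ≠ 0 := by
    have h_three : (1 + 1 + 1 : F2) = 1 := by decide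
    simp [hQ, h_three]
  have hQ_ne : Q ≠ 0 := fun h => h_eval (by rw [h, Polynomial.eval_zero])
  rw [h_factor, Polynomial.rootMultiplicity_mul_X_sub_C_pow hQ_ne,
    Polynomial.rootMultiplicity_eq_zero h_eval, zero_add]

theorem linearIndepOn_topFactor (n t i j : ℕ) :
    LinearIndepOn F2 topFactor (standardExponentsOfType n t i j) := by
  set U := standardExponentsOfType n t i j
  have h_eq_zero : LinearIndepOn F2 topFactor {m ∈ U | m 5 = 0} := by
    refine linearIndepOn_of_linearIndepOn_coeff (fun m => 2 * m 6 + m 7 + m 8 + 2 * m 5 + 3 * m 4)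
      (fun m _ => (hasTopCoeff_topFactor m).1) fun N => linearIndepOn_of_subsingleton ?_ ?_
    · rintro m ⟨⟨hm, h5⟩, hN⟩ m' ⟨⟨hm', h5'⟩, hN'⟩
      refine eq_of_mem_standardExponentsOfType_of_eq_zero hm hm' h5 h5' ?_
      simpa only [h5, h5', mul_zero, add_zero] using hN.trans hN'.symm
    · rintro m ⟨-, rfl⟩
      exact (hasTopCoeff_topFactor m).2.symm ▸ one_ne_zero
  have h_union : {m ∈ U | m 5 ≠ 0} ∪ {m ∈ U | m 5 = 0} = U := by
    ext m
    by_cases h5 : m 5 = 0 <;> simp [h5]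
  rw [← h_union]
  refine linearIndepOn_union_of_rootMultiplicity 1 (fun m _ => topFactor_ne_zero m) ?_ h_eq_zero ?_
  · rintro m ⟨hm, h5⟩ m' ⟨hm', h5'⟩ h
    simp only [rootMultiplicity_one_topFactor] at h
    exact eq_of_mem_standardExponentsOfType_of_ne_zero hm hm' h5 h5' h
  · rintro m ⟨hm, h5⟩ m' ⟨hm', h5'⟩
    simpa only [rootMultiplicity_one_topFactor] using
      lt_of_mem_standardExponentsOfType hm hm' h5 h5'

end TopFactor

universe u

theorem exists_isAlgClosed_injective_algHom (k : Type*) (B : Type u) [CommRing k] [CommRing B]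
    [IsDomain B] [Algebra k B] : ∃ (K : Type u) (_ : Field K) (_ : IsAlgClosed K) (_ : Algebra k K)
      (φ : B →ₐ[k] K), Function.Injective φ := by
  refine ⟨AlgebraicClosure (FractionRing B), inferInstance, inferInstance, inferInstance,
    (IsScalarTower.toAlgHom k (FractionRing B) (AlgebraicClosure (FractionRing B))).comp
      (IsScalarTower.toAlgHom k B (FractionRing B)), ?_⟩
  exact (algebraMap (FractionRing B) (AlgebraicClosure (FractionRing B))).injective.comp
    (IsFractionRing.injective B (FractionRing B))

section GenericValues

/-- The right hand side of the relation modulo `d₇` whose left hand side has code `k`. -/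
def relationRHS (k : ℕ) : List ℕ := (relationsModD7.lookup k).getD []

/-- The values of the generators at a point with `d₇ = 0` and `d₆ = 1`, in terms of the values `p`,
`s`, `y`, `e₆`, `e₇` of the parameters `q₂`, `q₃`, `e₄`, `e₆`, `e₇` and of a square root `x` of the
value of `d₄`. -/
def pointValues {R : Type*} [CommSemiring R] (x y p s e₆ e₇ : R) : Fin 11 → R :=
  ![p, s, s ^ 2 + (x ^ 3 + x * p ^ 2 + 1), y, e₆, e₇, x ^ 2, x * s + (x + p),
    x * s ^ 4 + (x ^ 7 + x ^ 4 + x ^ 3 * p ^ 4 + x + p ^ 4), 1, 0]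

/-- The values of the generators at a point with `d₇ = 0` and `d₆ = 1`: the relations for `e₆ * d₆`
and `e₇ * d₆` express the values of `e₆` and `e₇` by the other ones. -/
def genericValues {R : Type*} [CommSemiring R] (x y p s : R) : Fin 11 → R :=
  pointValues x y p s (evalCodes (pointValues x y p s 0 0) (relationRHS 1000010000))
    (evalCodes (pointValues x y p s 0 0) (relationRHS 1000100000))

/-- The coefficients of the values of the generators at `genericValues` in degree `topDegree` in the
variable `s`. -/
def topCoeffs {R : Type*} [CommSemiring R] (x y p e₆ e₇ : R) : Fin 11 → R :=
  ![p, 1, 1, y, e₆, e₇, x ^ 2, x, x, 1, 0]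

theorem pointValues_four {R : Type*} [CommSemiring R] (x y p s e₆ e₇ : R) :
    pointValues x y p s e₆ e₇ 4 = e₆ := rfl

theorem pointValues_five {R : Type*} [CommSemiring R] (x y p s e₆ e₇ : R) :
    pointValues x y p s e₆ e₇ 5 = e₇ := rfl

theorem pointValues_eq_pointValues {R : Type*} [CommSemiring R] (x y p s e₆ e₇ e₆' e₇' : R)
    {i : Fin 11} (hi : i ∉ ({4, 5} : Finset (Fin 11))) :
    pointValues x y p s e₆ e₇ i = pointValues x y p s e₆' e₇' i := by
  fin_cases i <;> first | exact absurd (by decide) hi | simp [pointValues]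

theorem map_comp_pointValues {R T F : Type*} [CommSemiring R] [CommSemiring T] [FunLike F R T]
    [RingHomClass F R T] (φ : F) (x y p s e₆ e₇ : R) :
    φ ∘ pointValues x y p s e₆ e₇ = pointValues (φ x) (φ y) (φ p) (φ s) (φ e₆) (φ e₇) := by
  ext i
  fin_cases i <;> simp [pointValues]

theorem map_comp_genericValues {R T F : Type*} [CommSemiring R] [CommSemiring T] [FunLike F R T]
    [RingHomClass F R T] (φ : F) (x y p s : R) :
    φ ∘ genericValues x y p s = genericValues (φ x) (φ y) (φ p) (φ s) := by
  simp only [genericValues, map_comp_pointValues, map_evalCodes, map_zero]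

variable {B : Type u} [CommRing B] (x y p : B)

theorem hasTopCoeff_pointValues {e₆ e₇ : Polynomial B} {c₆ c₇ : B} (h₆ : HasTopCoeff e₆ 6 c₆)
    (h₇ : HasTopCoeff e₇ 7 c₇) (i : Fin 11) :
    HasTopCoeff
      (pointValues (Polynomial.C x) (Polynomial.C y) (Polynomial.C p) Polynomial.X e₆ e₇ i)
      (topDegree i) (topCoeffs x y p c₆ c₇ i) := by
  have hX_pow (n : ℕ) : HasTopCoeff (Polynomial.C x * Polynomial.X ^ n) n x := by
    simpa only [zero_add, mul_one] using (HasTopCoeff.C x).mul (.X_pow n)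
  have hx : HasTopCoeff (Polynomial.C x) 0 x := .C x
  have hp : HasTopCoeff (Polynomial.C p) 0 p := .C p
  fin_cases i
  · exact hp
  · exact .X
  · exact (HasTopCoeff.X_pow 2).add_of_lt (((hx.pow 3).add (hx.mul (hp.pow 2))).add .one) two_pos
  · exact .C y
  · exact h₆
  · exact h₇
  · exact hx.pow 2
  · exact (pow_one (Polynomial.X : Polynomial B) ▸ hX_pow 1).add_of_lt (hx.add hp) one_pos
  · exact (hX_pow 4).add_of_lt (((((hx.pow 7).add (hx.pow 4)).add
      ((hx.pow 3).mul (hp.pow 4))).add hx).add (hp.pow 4)) four_pos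
  · exact .one
  · exact .zero 0

theorem hasTopCoeff_genericValues (i : Fin 11) :
    HasTopCoeff (genericValues (Polynomial.C x) (Polynomial.C y) (Polynomial.C p) Polynomial.X i)
      (topDegree i) (topCoeffs x y p (x ^ 3 + 1) (x ^ 2) i) := by
  have h_zero := hasTopCoeff_pointValues x y p (.zero 6) (.zero 7)
  refine hasTopCoeff_pointValues x y p ?_ ?_ i
  · have h_top : (relationRHS 1000010000).filter (fun k =>
        weightedDegree topDegree (decimalExponents k) = 6) = [220, 101000100] := by decide +kernel
    have h_coeff : evalCodes (topCoeffs x y p 0 0) [220, 101000100] = x ^ 3 + 1 := by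
      simp [evalCodes, powerProduct, Fin.prod_univ_succ, topCoeffs, decimalExponents, pow_succ,
        add_comm]
    exact h_coeff ▸ h_top ▸ hasTopCoeff_evalCodes h_zero (by decide +kernel)
  · have h_top : (relationRHS 1000100000).filter (fun k =>
        weightedDegree topDegree (decimalExponents k) = 7) = [110000100] := by decide +kernel
    have h_coeff : evalCodes (topCoeffs x y p 0 0) [110000100] = x ^ 2 := by
      simp [evalCodes, powerProduct, Fin.prod_univ_succ, topCoeffs, decimalExponents, pow_succ]
    exact h_coeff ▸ h_top ▸ hasTopCoeff_evalCodes h_zero (by decide +kernel)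

theorem linearIndepOn_powerProduct_genericValues {k : Type*} [CommRing k] [Algebra k B]
    {S : Set (Fin 11 → ℕ)}
    (h : ∀ t, LinearIndepOn k (powerProduct (topCoeffs x y p (x ^ 3 + 1) (x ^ 2)))
      {m ∈ S | weightedDegree topDegree m = t}) :
    LinearIndepOn k (powerProduct (genericValues (Polynomial.C x) (Polynomial.C y) (Polynomial.C p)
      Polynomial.X)) S := by
  have h_top := hasTopCoeff_powerProduct (hasTopCoeff_genericValues x y p)
  refine linearIndepOn_of_linearIndepOn_coeff (weightedDegree topDegree) (fun m _ => (h_top m).1)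
    fun t => (h t).congr ?_
  rintro m ⟨-, rfl⟩
  exact (h_top m).2.symm

theorem exists_isAlgClosed_linearIndepOn_of_topCoeffs {k ι : Type*} [CommRing k] [IsDomain B]
    [Algebra k B] {S : ι → Set (Fin 11 → ℕ)}
    (h : ∀ i t, LinearIndepOn k (powerProduct (topCoeffs x y p (x ^ 3 + 1) (x ^ 2)))
      {m ∈ S i | weightedDegree topDegree m = t}) :
    ∃ (K : Type u) (_ : Field K) (_ : IsAlgClosed K) (_ : Algebra k K) (x y p s : K),
      ∀ i, LinearIndepOn k (powerProduct (genericValues x y p s)) (S i) := by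
  obtain ⟨K, _, _, _, φ, hφ⟩ := exists_isAlgClosed_injective_algHom k (Polynomial B)
  refine ⟨K, ‹_›, ‹_›, ‹_›, φ (.C x), φ (.C y), φ (.C p), φ .X, fun i => ?_⟩
  refine ((linearIndepOn_powerProduct_genericValues x y p (h i)).map_injOn φ.toLinearMap
    hφ.injOn).congr fun m _ => ?_
  exact (map_powerProduct φ _ m).trans (by rw [map_comp_genericValues])

local notation "B₃" => Polynomial (Polynomial (Polynomial F2))
local notation "x₃" => (Polynomial.C (Polynomial.C Polynomial.X) : B₃)
local notation "y₃" => (Polynomial.C Polynomial.X : B₃)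
local notation "p₃" => (Polynomial.X : B₃)

theorem powerProduct_topCoeffs {m : Fin 11 → ℕ} (h10 : m 10 = 0) :
    powerProduct (topCoeffs x₃ y₃ p₃ (x₃ ^ 3 + 1) (x₃ ^ 2)) m =
      Polynomial.C (Polynomial.C (topFactor m) * Polynomial.X ^ m 3) * Polynomial.X ^ m 0 := by
  simp only [powerProduct, Fin.prod_univ_succ, topCoeffs, topFactor, Matrix.cons_val_zero,
    Matrix.cons_val_succ, Fin.succ_zero_eq_one, Fin.succ_one_eq_two, Fin.reduceSucc,
    Finset.univ_unique, Fin.default_eq_zero, Matrix.cons_val_fin_one, Finset.prod_singleton, h10,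
    pow_zero, one_pow, mul_one, one_mul, map_mul, map_pow, map_add, map_one]
  ring

theorem linearIndepOn_powerProduct_topCoeffs (n t : ℕ) :
    LinearIndepOn F2 (powerProduct (topCoeffs x₃ y₃ p₃ (x₃ ^ 3 + 1) (x₃ ^ 2)))
      {m ∈ {m ∈ standardExponents | weightedDegree generatorDegree m = n} |
        weightedDegree topDegree m = t} := by
  suffices h : LinearIndepOn F2 (fun m : Fin 11 → ℕ => Polynomial.C (Polynomial.C (topFactor m) *
      Polynomial.X ^ m 3) * Polynomial.X ^ m 0) {m ∈ {m ∈ standardExponents |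
        weightedDegree generatorDegree m = n} | weightedDegree topDegree m = t} from
    h.congr fun m hm => (powerProduct_topCoeffs hm.1.1.1).symm
  refine linearIndepOn_C_mul_X_pow _ fun i => linearIndepOn_C_mul_X_pow _ fun j => ?_
  refine (linearIndepOn_topFactor n t i j).mono ?_
  rintro m ⟨⟨⟨⟨hm, hn⟩, ht⟩, hi⟩, hj⟩
  exact ⟨hm, hn, ht, hi, hj⟩

theorem exists_isAlgClosed_linearIndepOn_powerProduct_genericValues :
    ∃ (K : Type) (_ : Field K) (_ : IsAlgClosed K) (_ : Algebra F2 K) (x y p s : K),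
      ∀ n, LinearIndepOn F2 (powerProduct (genericValues x y p s))
        {m ∈ standardExponents | weightedDegree generatorDegree m = n} :=
  exists_isAlgClosed_linearIndepOn_of_topCoeffs x₃ y₃ p₃ linearIndepOn_powerProduct_topCoeffs

end GenericValues

section GenericPoint

theorem exists_evalCodes_e4Codes_eq {K : Type*} [Field K] [IsAlgClosed K] (a b d e f y : K) :
    ∃ c, evalCodes ![a, b, c, d, e, f] e4Codes = y := by
  let v : Fin 6 → Polynomial K := ![.C a, .C b, .X, .C d, .C e, .C f]
  have hv (i : Fin 6) : HasTopCoeff (v i) (![0, 0, 1, 0, 0, 0] i) (![a, b, 1, d, e, f] i) := by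
    fin_cases i
    exacts [.C a, .C b, .X, .C d, .C e, .C f]
  have h_top : e4Codes.filter (fun k => weightedDegree (![0, 0, 1, 0, 0, 0] : Fin 6 → ℕ)
      (decimalExponents k) = 4) = [400] := by decide +kernel
  have h_one : evalCodes ![a, b, 1, d, e, f] [400] = 1 := by
    simp [evalCodes, powerProduct, decimalExponents, Fin.prod_univ_six]
  have h_monic : HasTopCoeff (evalCodes v e4Codes) 4 1 :=
    h_one ▸ h_top ▸ hasTopCoeff_evalCodes hv (by decide +kernel)
  obtain ⟨c, hc⟩ := h_monic.exists_eval_eq four_ne_zero y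
  refine ⟨c, ?_⟩
  rw [← hc, ← Polynomial.coe_evalRingHom, map_evalCodes]
  congr 1
  ext i
  fin_cases i <;> simp [v]

/-- Over `d = 0` the Dickson polynomial with roots the span of `e` and `f` is
`T ^ 8 + x ^ 2 * T ^ 4 + T ^ 2 = (T ^ 4 + x * T ^ 2 + T) ^ 2`; hence the conditions on `e`, `f`. -/
theorem evalCodes_generatorCodes_eq_pointValues {K : Type*} [CommRing K] [CharP K 2]
    {x p s c e f : K} (he : e ^ 3 + x * e + 1 = 0) (hf : f ^ 2 + e * f + (e ^ 2 + x) = 0)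
    (y e₆ e₇ : K) {i : Fin 11} (hi : i ∉ ({3, 4, 5} : Finset (Fin 11))) :
    evalCodes ![f * s + f ^ 2 * (p + x), e * s + e ^ 2 * (p + x), c, 0, e, f] (generatorCodes i) =
      pointValues x y p s e₆ e₇ i := by
  fin_cases i <;> first | exact absurd (by decide) hi | skip
  all_goals
    simp [evalCodes, powerProduct, decimalExponents, Fin.prod_univ_six, generatorCodes,
      pointValues, q2Codes, q3Codes, r3Codes, d4Codes, q5Codes, r5Codes, d6Codes, d7Codes] <;> grind

theorem eq_genericValues_of_satisfiesRelations {R : Type*} [CommSemiring R] {x y p s : R}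
    {v : Fin 11 → R} (hv : SatisfiesRelations v relationsModD7)
    (h : ∀ i ∉ ({4, 5} : Finset (Fin 11)), v i = pointValues x y p s 0 0 i) :
    v = genericValues x y p s := by
  have h9 : v 9 = 1 := h 9 (by decide)
  have h10 : v 10 = 0 := h 10 (by decide)
  have h_rhs {k : ℕ} (hk : ∀ c ∈ relationRHS k, decimalExponents c (10 : Fin 11) ≠ 0 ∨
      ∀ i : Fin 11, decimalExponents c i ≠ 0 → i ∉ ({4, 5} : Finset (Fin 11))) :
      evalCodes v (relationRHS k) = evalCodes (pointValues x y p s 0 0) (relationRHS k) :=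
    evalCodes_congr fun c hc => (hk c hc).imp (fun h_pos => ⟨10, h10, rfl, h_pos⟩)
      fun h_notMem i hi => h i (h_notMem i hi)
  have h4 : v 4 = genericValues x y p s 4 := by
    have h_rel := hv (1000010000, relationRHS 1000010000) (by decide +kernel)
    rw [h_rhs (by decide +kernel)] at h_rel
    simpa [powerProduct, Fin.prod_univ_succ, decimalExponents, h9, genericValues,
      pointValues_four] using h_rel
  have h5 : v 5 = genericValues x y p s 5 := by
    have h_rel := hv (1000100000, relationRHS 1000100000) (by decide +kernel)
    rw [h_rhs (by decide +kernel)] at h_rel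
    simpa [powerProduct, Fin.prod_univ_succ, decimalExponents, h9, genericValues,
      pointValues_five] using h_rel
  ext i
  by_cases hi : i ∈ ({4, 5} : Finset (Fin 11))
  · rcases Finset.mem_insert.mp hi with rfl | hi
    · exact h4
    · exact Finset.mem_singleton.mp hi ▸ h5
  · exact (h i hi).trans (pointValues_eq_pointValues x y p s 0 0 _ _ hi)

theorem exists_algHom_eq_genericValues {K : Type*} [Field K] [IsAlgClosed K] [Algebra F2 K]
    (x y p s : K) : ∃ φ : S6 →ₐ[F2] K, φ (X 3) = 0 ∧ φ ∘ generator = genericValues x y p s := by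
  have : CharP K 2 := charP_of_injective_algebraMap (algebraMap F2 K).injective 2
  obtain ⟨e, he⟩ : ∃ e : K, e ^ 3 + x * e + 1 = 0 := by
    have h_monic : HasTopCoeff (.X ^ 3 + (.C x * .X + 1) : Polynomial K) 3 1 :=
      (HasTopCoeff.X_pow 3).add_of_lt (((HasTopCoeff.C x).mul .X).add (.of_lt .one one_pos))
        (by norm_num)
    simpa [add_assoc] using h_monic.exists_eval_eq three_ne_zero 0
  obtain ⟨f, hf⟩ : ∃ f : K, f ^ 2 + e * f + (e ^ 2 + x) = 0 := by
    have h_monic : HasTopCoeff (.X ^ 2 + (.C e * .X + .C (e ^ 2 + x)) : Polynomial K) 2 1 :=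
      (HasTopCoeff.X_pow 2).add_of_lt (((HasTopCoeff.C e).mul .X).add (.of_lt (.C _) one_pos))
        (by norm_num)
    simpa [add_assoc] using h_monic.exists_eval_eq two_ne_zero 0
  obtain ⟨c, hc⟩ := exists_evalCodes_e4Codes_eq (f * s + f ^ 2 * (p + x))
    (e * s + e ^ 2 * (p + x)) 0 e f y
  let φ : S6 →ₐ[F2] K := aeval ![f * s + f ^ 2 * (p + x), e * s + e ^ 2 * (p + x), c, 0, e, f]
  have hφ (i) : φ (generator i) = evalCodes
      ![f * s + f ^ 2 * (p + x), e * s + e ^ 2 * (p + x), c, 0, e, f] (generatorCodes i) := by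
    rw [generator, map_evalCodes]
    exact congrArg (evalCodes · _) (funext fun j => aeval_X _ j)
  refine ⟨φ, aeval_X _ 3, eq_genericValues_of_satisfiesRelations
    (generator_satisfiesRelations_modD7.map φ) fun i hi => (hφ i).trans ?_⟩
  by_cases h3 : i = 3
  · exact h3 ▸ hc
  · exact evalCodes_generatorCodes_eq_pointValues he hf y 0 0 (by simp_all)

end GenericPoint

section CancelD7

theorem aeval_mul_right_of_isHomogeneous {σ k A : Type*} [CommSemiring k] [CommSemiring A]
    [Algebra k A] {p : MvPolynomial σ k} {n : ℕ} (hp : p.IsHomogeneous n) (v : σ → A) (t : A) :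
    aeval (fun i => v i * t) p = aeval v p * t ^ n := by
  rw [aeval_def, aeval_def, eval₂_eq, eval₂_eq, Finset.sum_mul]
  refine Finset.sum_congr rfl fun m hm => ?_
  have h_deg : m.degree = n := hp.degree_eq_sum_deg_support hm |>.symm
  simp only [mul_pow, Finset.prod_mul_distrib, Finset.prod_pow_eq_pow_sum, mul_assoc, ← h_deg,
    Finsupp.degree_apply]

theorem eq_zero_of_X_dvd_linearCombination {l : (Fin 11 → ℕ) →₀ F2}
    (hl : l ∈ Finsupp.supported F2 F2 standardExponents)
    (h_dvd : X 3 ∣ Finsupp.linearCombination F2 (powerProduct generator) l) : l = 0 := by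
  obtain ⟨K, _, _, _, x, y, p, s, h_indep⟩ :=
    exists_isAlgClosed_linearIndepOn_powerProduct_genericValues
  obtain ⟨φ, hφ3, hφ⟩ := exists_algHom_eq_genericValues x y p s
  let Φ : S6 →ₐ[F2] Polynomial K := aeval fun i => Polynomial.C (φ (X i)) * Polynomial.X
  have hΦ (m) : Φ (powerProduct generator m) = Polynomial.C (powerProduct (genericValues x y p s) m)
      * Polynomial.X ^ weightedDegree generatorDegree m := by
    have h_hom := isHomogeneous_powerProduct generator_isHomogeneous m
    rw [← hφ, ← map_powerProduct, aeval_mul_right_of_isHomogeneous h_hom]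
    congr 1
    exact DFunLike.congr_fun (algHom_ext (f := aeval fun i => Polynomial.C (φ (X i)))
      (g := Polynomial.CAlgHom.comp φ) fun i => aeval_X _ i) _
  have h_indep_Φ : LinearIndepOn F2 (Φ.toLinearMap ∘ powerProduct generator) standardExponents :=
    (linearIndepOn_C_mul_X_pow _ h_indep).congr fun m _ => (hΦ m).symm
  refine linearIndepOn_iff.mp h_indep_Φ l hl ?_
  obtain ⟨u, hu⟩ := h_dvd
  have hΦ3 : Φ (X 3) = 0 := by simp [Φ, hφ3]
  rw [← Finsupp.apply_linearCombination, hu, AlgHom.toLinearMap_apply, map_mul, hΦ3, zero_mul]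

theorem X_dvd_d7 : (X 3 : S6) ∣ d7 :=
  ⟨X 4 ^ 2 * X 5 ^ 4 + X 4 ^ 4 * X 5 ^ 2 + X 3 * X 4 * X 5 ^ 4 + X 3 * X 4 ^ 4 * X 5 +
    X 3 ^ 3 * X 4 * X 5 ^ 2 + X 3 ^ 3 * X 4 ^ 2 * X 5, by rw [d7_eq]; ring⟩

theorem d7_ne_zero : d7 ≠ 0 := by
  intro h
  have h_eval := congrArg (aeval (![0, 0, 0, 1, .X, .X ^ 3] : Fin 6 → Polynomial F2)) h
  have h_coeff := congrArg (Polynomial.coeff · 14) h_eval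
  rw [d7_eq] at h_coeff
  simp [Polynomial.coeff_X_pow, ← pow_mul, ← pow_add, ← pow_succ'] at h_coeff

theorem mem_adjoin_generator_of_d7_mul_mem {u : S6}
    (h : d7 * u ∈ Algebra.adjoin F2 (Set.range generator)) :
    u ∈ Algebra.adjoin F2 (Set.range generator) := by
  obtain ⟨l, hl, a, ha, h_eq⟩ :=
    exists_standard_add_mul_of_satisfiesRelations generator_satisfiesRelations_modD7 h
  have h_comb : Finsupp.linearCombination F2 (powerProduct generator) l = d7 * (u - a) := by
    rw [mul_sub, h_eq, add_sub_cancel_right]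
  have hl_zero : l = 0 :=
    eq_zero_of_X_dvd_linearCombination hl (h_comb ▸ X_dvd_d7.mul_right _)
  rw [hl_zero, map_zero, zero_add] at h_eq
  exact mul_left_cancel₀ d7_ne_zero h_eq ▸ ha

theorem mem_adjoin_generator_of_d7_pow_mul_mem {u : S6} {k : ℕ}
    (h : d7 ^ k * u ∈ Algebra.adjoin F2 (Set.range generator)) :
    u ∈ Algebra.adjoin F2 (Set.range generator) := by
  induction k with
  | zero => rwa [pow_zero, one_mul] at h
  | succ k ih => exact ih (mem_adjoin_generator_of_d7_mul_mem (by rwa [← mul_assoc, ← pow_succ']))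

theorem localizedGenerators_subset_range_generator : localizedGenerators ⊆ Set.range generator := by
  rintro _ (rfl | rfl | rfl | rfl | rfl | rfl) <;> exact Set.mem_range_self _

theorem mem_adjoin_generator_iff {u : S6} :
    u ∈ Algebra.adjoin F2 (Set.range generator) ↔ substA u = u ∧ substB u = u := by
  constructor
  · have adjoin_le_of_fixed {σ : S6 →ₐ[F2] S6} (hσ : ∀ i, σ (generator i) = generator i) :
        Algebra.adjoin F2 (Set.range generator) ≤ AlgHom.equalizer σ (AlgHom.id F2 S6) :=
      Algebra.adjoin_le (Set.range_subset_iff.mpr hσ)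
    exact fun hu => ⟨adjoin_le_of_fixed substA_generator hu, adjoin_le_of_fixed substB_generator hu⟩
  · rintro ⟨hA, hB⟩
    obtain ⟨k, hk⟩ := exists_d7_pow_mul_mem_adjoin_localizedGenerators hA hB
    exact mem_adjoin_generator_of_d7_pow_mul_mem
      (Algebra.adjoin_mono localizedGenerators_subset_range_generator hk)

end CancelD7

/-! ### The invariant ring -/

theorem range_castAdd_union_range_natAdd {α : Type*} {m n : ℕ} (v : Fin (m + n) → α) :
    Set.range (fun i : Fin m => v (i.castAdd n)) ∪ Set.range (fun j : Fin n => v (j.natAdd m)) =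
      Set.range v := by
  refine (Set.union_subset (Set.range_comp_subset_range _ v)
    (Set.range_comp_subset_range _ v)).antisymm ?_
  rintro _ ⟨i, rfl⟩
  induction i using Fin.addCases with
  | left i => exact .inl ⟨i, rfl⟩
  | right j => exact .inr ⟨j, rfl⟩

section InvariantRing

variable (D : G3 →* GL (Fin 6) F2) (hA : (D Agen : Matrix (Fin 6) (Fin 6) F2) = DA6)
  (hB : (D Bgen : Matrix (Fin 6) (Fin 6) F2) = DB6)

/-- The eleven generators as elements of the invariant ring. -/
noncomputable def invariantGenerator (i : Fin 11) : invG D :=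
  ⟨generator i, (mem_invG_iff D hA hB _).mpr ⟨substA_generator i, substB_generator i⟩⟩

theorem adjoin_range_invariantGenerator :
    Algebra.adjoin F2 (Set.range (invariantGenerator D hA hB)) = ⊤ := by
  refine Subalgebra.map_injective (f := (invG D).val) Subtype.val_injective ?_
  rw [AlgHom.map_adjoin, ← Set.range_comp, Algebra.map_top, Subalgebra.range_val]
  ext u
  exact mem_adjoin_generator_iff.trans (mem_invG_iff D hA hB u).symm

theorem invariantGenerator_satisfiesRelations_overParameters :
    SatisfiesRelations (invariantGenerator D hA hB) relationsOverParameters :=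
  .of_map (φ := (invG D).val) Subtype.val_injective generator_satisfiesRelations_overParameters

end InvariantRing

/-- The invariant ring `S[W'^*]^G` is generated as an `𝔽₂`-algebra by
`11` homogeneous invariants, namely a homogeneous system of parameters of degrees
`2, 3, 3, 4, 6, 7` together with `5` further homogeneous invariants of degrees
`4, 5, 5, 6, 7`; in particular, `S[W'^*]^G` is generated as an `𝔽₂`-algebra by
invariants of degree at most `7`. -/
theorem stmt16 (D : G3 →* GL (Fin 6) F2)
    (hA : (D Agen : Matrix (Fin 6) (Fin 6) F2) = DA6)
    (hB : (D Bgen : Matrix (Fin 6) (Fin 6) F2) = DB6) :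
    ∃ f : Fin 6 → (invG D),
      -- `f` is a homogeneous system of parameters of degrees `2, 3, 3, 4, 6, 7` …
      AlgebraicIndependent F2 f ∧
      (∀ i, (f i : MvPolynomial (Fin 6) F2).IsHomogeneous (![2, 3, 3, 4, 6, 7] i)) ∧
      Module.Finite (Algebra.adjoin F2 (Set.range f)) (invG D) ∧
      -- … and together with `5` further homogeneous invariants of degrees `4, 5, 5, 6, 7`
      -- it generates `S[W'^*]^G` as an `𝔽₂`-algebra:
      ∃ g : Fin 5 → (invG D),
        (∀ j, (g j : MvPolynomial (Fin 6) F2).IsHomogeneous (![4, 5, 5, 6, 7] j)) ∧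
        Algebra.adjoin F2 (Set.range f ∪ Set.range g) = (⊤ : Subalgebra F2 (invG D)) := by
  let v := invariantGenerator D hA hB
  have h_gen : Algebra.adjoin F2 (Set.range v) = ⊤ := adjoin_range_invariantGenerator D hA hB
  have h_hom (i) : (v i : S6).IsHomogeneous (generatorDegree i) := generator_isHomogeneous i
  let f : Fin 6 → invG D := fun i => v (i.castLE (by decide))
  let g : Fin 5 → invG D := fun j => v (j.natAdd 6)
  have h_range : Set.range f ∪ Set.range g = Set.range v :=
    range_castAdd_union_range_natAdd (m := 6) (n := 5) v
  have h_finite : Module.Finite (Algebra.adjoin F2 (Set.range f)) (invG D) :=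
    finite_over_parameters_of_satisfiesRelations
      (invariantGenerator_satisfiesRelations_overParameters D hA hB) h_gen
  have h_integral : Algebra.IsIntegral (invG D) S6 := isIntegral_invG D
  refine ⟨f, algebraicIndependent_of_finite_of_isIntegral f, fun i => ?_, h_finite, g,
    fun j => ?_, h_range ▸ h_gen⟩
  · convert h_hom (i.castLE (by decide))
    revert i
    decide
  · convert h_hom (j.natAdd 6)
    revert j
    decide
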